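/- arXiv:2105.10677 — 5 statements merged into one kernel-verified Lean document; each statement's English description precedes it below -/
import Mathlib

section
/- Let 1 ≤ p < q ≤ m with q − p > 1 and let D be a regular domain that is a (p, q)-hybrid* domain. Let φ : D^n → Δ(A) be a unanimous and strategy-proof RSCF. Then for every voter i ∈ N, every P_{-i} ∈ D^{n−1}, and all P_i, P_i′ ∈ D whose tops a_s = r_1(P_i) and a_t = r_1(P_i′) are distinct alternatives in M: φ_{a_k}(P_i, P_{-i}) = φ_{a_k}(P_i′, P_{-i}) for every alternative a_k ∉ {a_s, a_t}. -/
open Finset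

noncomputable section

/-- A preference is a linear order over the `m` alternatives, represented as a bijection
from rank positions (0-based: position `0` is the top) to alternatives. -/
abbrev Pref (m : ℕ) := Fin m ≃ Fin m

namespace PFBRPaper

variable {m n : ℕ}

/-- `a` is strictly preferred to `b` under `P`. -/
def Prefers (P : Pref m) (a b : Fin m) : Prop := P.symm a < P.symm b

/-- The last alternative `a_m` (0-based index `m-1`). -/
def lastAlt (m : ℕ) [NeZero m] : Fin m :=
  ⟨m - 1, Nat.sub_lt (Nat.pos_of_ne_zero (NeZero.ne m)) Nat.one_pos⟩

/-- Every alternative is top-ranked by some preference in the domain. -/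
def MinimallyRich [NeZero m] (D : Set (Pref m)) : Prop :=
  ∀ a : Fin m, ∃ P ∈ D, P 0 = a

/-- The preference ranking `a_m` first, ..., `a_1` last. -/
def revPref (m : ℕ) : Pref m :=
  ⟨Fin.rev, Fin.rev, fun i => Fin.rev_rev i, fun i => Fin.rev_rev i⟩

/-- Diversity, with the labeling convention: the domain contains the preference ranking
`a_1` first, `a_2` second, ..., `a_m` last (the identity), together with its
complete reversal. -/
def Diversity (D : Set (Pref m)) : Prop :=
  Equiv.refl (Fin m) ∈ D ∧ revPref m ∈ D

/-- Two preferences are adjacent: the alternatives at two contiguous rank positions are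
swapped and everything else is unchanged. -/
def Adjacent (P P' : Pref m) : Prop :=
  P ≠ P' ∧ ∃ k : ℕ, ∃ hk : k + 1 < m,
    P ⟨k, Nat.lt_of_succ_lt hk⟩ = P' ⟨k + 1, hk⟩ ∧
    P ⟨k + 1, hk⟩ = P' ⟨k, Nat.lt_of_succ_lt hk⟩ ∧
    ∀ l : Fin m, (l : ℕ) ≠ k → (l : ℕ) ≠ k + 1 → P l = P' l

/-- `π 0, …, π (v-1)` is a path in `D` connecting `P` and `P'`. -/
def IsPath (D : Set (Pref m)) (P P' : Pref m) (π : ℕ → Pref m) (v : ℕ) : Prop :=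
  1 ≤ v ∧ (∀ i < v, π i ∈ D) ∧
  (∀ i < v, ∀ j < v, π i = π j → i = j) ∧
  π 0 = P ∧ π (v - 1) = P' ∧
  ∀ i, i + 1 < v → Adjacent (π i) (π (i + 1))

/-- The path `π 0, …, π (v-1)` has no `{a,b}`-restoration: the relative ranking of
`a` and `b` switches at most once along the path. -/
def NoRestoration (π : ℕ → Pref m) (v : ℕ) (a b : Fin m) : Prop :=
  ∀ i j k : ℕ, i < j → j < k → k < v →
    ¬(Prefers (π i) a b ∧ Prefers (π j) b a ∧ Prefers (π k) a b) ∧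
    ¬(Prefers (π i) b a ∧ Prefers (π j) a b ∧ Prefers (π k) b a)

def NoRestorationDomain (D : Set (Pref m)) : Prop :=
  ∀ P ∈ D, ∀ P' ∈ D, P ≠ P' → ∀ a b : Fin m,
    ∃ π v, IsPath D P P' π v ∧ NoRestoration π v a b

def RegularDomain [NeZero m] (D : Set (Pref m)) : Prop :=
  MinimallyRich D ∧ Diversity D ∧ NoRestorationDomain D

/-- `a ≈ b`: the two alternatives are strongly connected in the domain `D`. -/
def StronglyConnected [NeZero m] (D : Set (Pref m)) (a b : Fin m) : Prop :=
  a ≠ b ∧ ∃ P ∈ D, ∃ P' ∈ D,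
    P 0 = a ∧ P 1 = b ∧ P' 0 = b ∧ P' 1 = a ∧
    ∀ k : Fin m, 2 ≤ (k : ℕ) → P k = P' k

/-- `l` is a vertex-path of the graph `G_≈^B(D)`. -/
def IsVertexPathOn [NeZero m] (D : Set (Pref m)) (B : Set (Fin m)) (l : List (Fin m)) : Prop :=
  l ≠ [] ∧ l.Nodup ∧ (∀ x ∈ l, x ∈ B) ∧ l.Chain' (StronglyConnected D)

/-- `l` is a vertex-path of `G_≈^B(D)` connecting `a` and `b`. -/
def VertexPathBetween [NeZero m] (D : Set (Pref m)) (B : Set (Fin m)) (a b : Fin m)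
    (l : List (Fin m)) : Prop :=
  IsVertexPathOn D B l ∧ l.head? = some a ∧ l.getLast? = some b

/-- `a` is a leaf of the subgraph `G_≈^B(D)`. -/
def IsLeaf [NeZero m] (D : Set (Pref m)) (B : Set (Fin m)) (a : Fin m) : Prop :=
  a ∈ B ∧ ∃! b : Fin m, b ∈ B ∧ StronglyConnected D a b

/-- Single-peakedness w.r.t. the natural order. -/
def SinglePeaked [NeZero m] (P : Pref m) : Prop :=
  ∀ a b : Fin m, ((a < b ∧ b < P 0) ∨ (P 0 < b ∧ b < a)) → Prefers P b a

/-- A `(p,q)`-hybrid preference (thresholds `p < q`, 0-based). -/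
def IsHybridPref [NeZero m] (p q : Fin m) (P : Pref m) : Prop :=
  (∀ r s : Fin m, ((r ≤ p ∧ s ≤ p) ∨ (q ≤ r ∧ q ≤ s)) →
      ((r < s ∧ s < P 0) ∨ (P 0 < s ∧ s < r)) → Prefers P s r) ∧
  (P 0 ≤ p → ∀ l : Fin m, p ≤ l → l ≤ q → l ≠ p → Prefers P p l) ∧
  (q ≤ P 0 → ∀ l : Fin m, p ≤ l → l ≤ q → l ≠ q → Prefers P q l)

/-- The `(p,q)`-hybrid domain of all `(p,q)`-hybrid preferences. -/
def hybridDomain [NeZero m] (p q : Fin m) : Set (Pref m) := {P | IsHybridPref p q P}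

/-- `D` is a `(p,q)`-hybrid* domain. -/
def IsHybridStar [NeZero m] (D : Set (Pref m)) (p q : Fin m) : Prop :=
  D ⊆ hybridDomain p q ∧
  (∀ k : Fin m, k ≠ 0 → k ≠ lastAlt m →
      ∃ l, VertexPathBetween D Set.univ 0 (lastAlt m) l ∧ k ∈ l) ∧
  ((p : ℕ) + 1 < (q : ℕ) → ∀ a : Fin m, ¬ IsLeaf D (Set.Icc p q) a)

/-- A lottery over the alternatives. -/
def Lottery (m : ℕ) : Type :=
  {f : Fin m → ℝ // (∀ a, 0 ≤ f a) ∧ ∑ a, f a = 1}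

/-- The probability that a lottery assigns to a set of alternatives. -/
def Lottery.prob (lam : Lottery m) (B : Finset (Fin m)) : ℝ := ∑ a ∈ B, lam.1 a

/-- The support of a lottery. -/
def Lottery.supp (lam : Lottery m) : Finset (Fin m) :=
  Finset.univ.filter (fun a => 0 < lam.1 a)

/-- The degenerate lottery on `a`. -/
def degLottery (a : Fin m) : Lottery m :=
  ⟨fun b => if b = a then 1 else 0,
   fun b => by by_cases h : b = a <;> simp [h],
   by simp⟩

/-- A profile of preferences drawn from the domain `D`. -/
abbrev Profile (D : Set (Pref m)) (n : ℕ) := Fin n → D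

/-- The top-ranked alternative of a preference in the domain. -/
def topOf [NeZero m] {D : Set (Pref m)} (P : D) : Fin m := P.1 0

def Unanimous [NeZero m] {D : Set (Pref m)} (φ : Profile D n → Lottery m) : Prop :=
  ∀ (P : Profile D n) (a : Fin m), (∀ i, topOf (P i) = a) → φ P = degLottery a

/-- The total probability of the `k` top-ranked alternatives of `P` under `lam`. -/
def topSum (lam : Lottery m) (P : Pref m) (k : ℕ) : ℝ :=
  ∑ t ∈ Finset.univ.filter (fun t : Fin m => (t : ℕ) < k), lam.1 (P t)

/-- Strategy-proofness: truth-telling first-order stochastically dominates any unilateral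
misrepresentation. -/
def StrategyProof {D : Set (Pref m)} (φ : Profile D n → Lottery m) : Prop :=
  ∀ (i : Fin n) (P : Profile D n) (Pi' : D) (k : ℕ), k ≤ m →
    topSum (φ (Function.update P i Pi')) (P i).1 k ≤ topSum (φ P) (P i).1 k

def TopsOnly [NeZero m] {D : Set (Pref m)} (φ : Profile D n → Lottery m) : Prop :=
  ∀ P P' : Profile D n, (∀ i, topOf (P i) = topOf (P' i)) → φ P = φ P'

def Anonymous {D : Set (Pref m)} (φ : Profile D n → Lottery m) : Prop :=
  ∀ (P : Profile D n) (σ : Equiv.Perm (Fin n)), φ (P ∘ σ) = φ P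

/-- The interval `[a_k, a_m]`. -/
def upSet (k : Fin m) : Finset (Fin m) := Finset.univ.filter (fun a => k ≤ a)

/-- The interval `[a_1, a_k]`. -/
def downSet (k : Fin m) : Finset (Fin m) := Finset.univ.filter (fun a => a ≤ k)

/-- The interval `[a_p, a_q]`. -/
def midSet (p q : Fin m) : Finset (Fin m) := Finset.univ.filter (fun a => p ≤ a ∧ a ≤ q)

/-- `S(k,P)`: the voters whose preference top is not to the left of `a_k`. -/
def voterSet [NeZero m] {D : Set (Pref m)} (P : Profile D n) (k : Fin m) : Finset (Fin n) :=
  Finset.univ.filter (fun i => k ≤ topOf (P i))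

/-- `β_{S(k,P)}([a_k, a_m])`, with the convention that it is `0` for `k = m`. -/
def tailProb [NeZero m] {D : Set (Pref m)} (β : Finset (Fin n) → Lottery m)
    (P : Profile D n) (k : ℕ) : ℝ :=
  if h : k < m then (β (voterSet P ⟨k, h⟩)).prob (upSet ⟨k, h⟩) else 0

def BallotUnanimity [NeZero m] (β : Finset (Fin n) → Lottery m) : Prop :=
  β Finset.univ = degLottery (lastAlt m) ∧ β ∅ = degLottery 0

def BallotMonotone (β : Finset (Fin n) → Lottery m) : Prop :=
  ∀ S T : Finset (Fin n), S ⊂ T →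
    ∀ k : Fin m, (β S).prob (upSet k) ≤ (β T).prob (upSet k)

/-- `φ` is a probabilistic fixed ballot rule with probabilistic ballots `β`. -/
def IsPFBRWith [NeZero m] {D : Set (Pref m)} (φ : Profile D n → Lottery m)
    (β : Finset (Fin n) → Lottery m) : Prop :=
  BallotUnanimity β ∧ BallotMonotone β ∧
  ∀ (P : Profile D n) (k : Fin m),
    (φ P).1 k = tailProb β P (k : ℕ) - tailProb β P ((k : ℕ) + 1)

def IsPFBR [NeZero m] {D : Set (Pref m)} (φ : Profile D n → Lottery m) : Prop :=
  ∃ β, IsPFBRWith φ β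

/-- The constrained random-dictatorship condition w.r.t. `a_p` and `a_q`. -/
def ConstrainedRD (p q : Fin m) (β : Finset (Fin n) → Lottery m) : Prop :=
  ∃ ε : Fin n → ℝ, (∀ i, 0 ≤ ε i) ∧ ∑ i, ε i = 1 ∧
    ∀ S : Finset (Fin n),
      (β S).prob (upSet q) = ∑ i ∈ S, ε i ∧
      (β S).prob (downSet p) = ∑ i ∈ Sᶜ, ε i

/-- The constrained random-dictatorship condition w.r.t. `a_p` and `a_q` with every
conditional dictatorial coefficient equal to `1/n`. -/
def ConstrainedRDUniform (p q : Fin m) (β : Finset (Fin n) → Lottery m) : Prop :=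
  ∀ S : Finset (Fin n),
    (β S).prob (upSet q) = (S.card : ℝ) / (n : ℝ) ∧
    (β S).prob (downSet p) = ((Sᶜ : Finset (Fin n)).card : ℝ) / (n : ℝ)

/-- Anonymity at the level of probabilistic ballots. -/
def BallotAnonymous (β : Finset (Fin n) → Lottery m) : Prop :=
  ∀ S S' : Finset (Fin n), S.Nonempty → S'.Nonempty → S.card = S'.card → β S = β S'

/-- Per-capita monotonicity w.r.t. `a_p` and `a_q`. -/
def PerCapitaMonotone (p q : Fin m) (β : Finset (Fin n) → Lottery m) : Prop :=
  ∀ S S' : Finset (Fin n), S.Nonempty → S ⊂ S' → S' ⊂ Finset.univ →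
    (∀ t : Fin m, q ≤ t →
      (β S).prob (upSet t) / (S.card : ℝ) ≤ (β S').prob (upSet t) / (S'.card : ℝ)) ∧
    (∀ s : Fin m, s ≤ p →
      (β Sᶜ).prob (downSet s) / (S.card : ℝ) ≤ (β S'ᶜ).prob (downSet s) / (S'.card : ℝ))

/-- Decomposability: `φ` is a mixture of finitely many unanimous and strategy-proof
deterministic social choice functions. -/
def Decomposable [NeZero m] {D : Set (Pref m)} (φ : Profile D n → Lottery m) : Prop :=
  ∃ (r : ℕ) (f : Fin r → (Profile D n → Fin m)) (α : Fin r → ℝ),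
    (∀ k, 0 < α k) ∧ ∑ k, α k = 1 ∧
    (∀ k, Unanimous (fun P => degLottery (f k P)) ∧
          StrategyProof (fun P => degLottery (f k P))) ∧
    ∀ (P : Profile D n) (a : Fin m),
      (φ P).1 a = ∑ k, α k * (if f k P = a then 1 else 0)

/-- `b̂_S^R`: the `≺`-minimum of `supp(β_S) ∩ R` (with the convention `b̂_N^R = a_m`). -/
def bR [NeZero m] (β : Finset (Fin n) → Lottery m) (q : Fin m) (S : Finset (Fin n)) : Fin m :=
  if h : ((β S).supp ∩ upSet q).Nonempty then ((β S).supp ∩ upSet q).min' h else lastAlt m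

/-- `b̂_S^L`: the `≺`-maximum of `supp(β_S) ∩ L` (with the convention `b̂_∅^L = a_1`). -/
def bL [NeZero m] (β : Finset (Fin n) → Lottery m) (p : Fin m) (S : Finset (Fin n)) : Fin m :=
  if h : ((β S).supp ∩ downSet p).Nonempty then ((β S).supp ∩ downSet p).max' h else 0

/-- `α = min over nonempty S ⊂ N of min(β_S(b̂_S^R)/|S|, β_S(b̂_S^L)/(n-|S|))`. -/
def alphaVal [NeZero m] (β : Finset (Fin n) → Lottery m) (p q : Fin m) : ℝ :=
  sInf {x : ℝ | ∃ S : Finset (Fin n), S.Nonempty ∧ S ≠ Finset.univ ∧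
    x = min ((β S).1 (bR β q S) / (S.card : ℝ))
            ((β S).1 (bL β p S) / ((n : ℝ) - (S.card : ℝ)))}

/-- `γ_S = (|S|/n) e_{b̂_S^R} + ((n-|S|)/n) e_{b̂_S^L}`, pointwise. -/
def gammaFun [NeZero m] (β : Finset (Fin n) → Lottery m) (p q : Fin m)
    (S : Finset (Fin n)) (a : Fin m) : ℝ :=
  ((S.card : ℝ) / (n : ℝ)) * (if a = bR β q S then 1 else 0)
  + (((n : ℝ) - (S.card : ℝ)) / (n : ℝ)) * (if a = bL β p S then 1 else 0)

/-- The max-min formula `f(P) = max_{S ⊆ N} min({r_1(P_j) : j ∈ S} ∪ {b_S})`. -/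
def fbrOutcome [NeZero m] {D : Set (Pref m)} (b : Finset (Fin n) → Fin m)
    (P : Profile D n) : Fin m :=
  Finset.univ.sup' Finset.univ_nonempty
    (fun S : Finset (Fin n) =>
      (insert (b S) (S.image (fun j => topOf (P j)))).inf' (Finset.insert_nonempty _ _) id)

/-- `f` is a `(p,q)`-fixed ballot rule with deterministic ballots `b` and constrained
dictator `i`. -/
def IsFBRWith [NeZero m] {D : Set (Pref m)} (p q : Fin m) (f : Profile D n → Fin m)
    (b : Finset (Fin n) → Fin m) (i : Fin n) : Prop :=
  b Finset.univ = lastAlt m ∧ b ∅ = 0 ∧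
  (∀ S T : Finset (Fin n), S ⊂ T → b S ≤ b T) ∧
  (∀ S : Finset (Fin n), (i ∈ S → q ≤ b S) ∧ (i ∉ S → b S ≤ p)) ∧
  ∀ P : Profile D n, f P = fbrOutcome b P

end PFBRPaper

open PFBRPaper

namespace RU

variable {m n : ℕ}

lemma topSum_eq (lam : Lottery m) (P : Pref m) (k : ℕ) :
    topSum lam P k = ∑ a, if ((P.symm a : Fin m) : ℕ) < k then lam.1 a else 0 := by
  unfold topSum
  rw [Finset.sum_filter]
  have := Equiv.sum_comp P
    (fun a => if ((P.symm a : Fin m) : ℕ) < k then lam.1 a else 0)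
  rw [← this]
  refine Finset.sum_congr rfl fun t _ => ?_
  rw [Equiv.symm_apply_apply]

lemma topSum_succ (lam : Lottery m) (P : Pref m) (t : Fin m) :
    topSum lam P ((t : ℕ) + 1) = topSum lam P t + lam.1 (P t) := by
  unfold topSum
  have : Finset.univ.filter (fun s : Fin m => (s : ℕ) < (t : ℕ) + 1)
      = insert t (Finset.univ.filter (fun s : Fin m => (s : ℕ) < (t : ℕ))) := by
    ext s
    simp only [Finset.mem_filter, Finset.mem_univ, true_and, Finset.mem_insert, Fin.ext_iff]
    omega
  rw [this, Finset.sum_insert (by simp)]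
  ring

lemma adj_struct [NeZero m] {D : Set (Pref m)} {φ : Profile D n → Lottery m}
    (hsp : StrategyProof φ) (Q Q' : D) (h : Adjacent Q.1 Q'.1) :
    ∃ z w : Fin m, z ≠ w ∧ Prefers Q.1 z w ∧ Prefers Q'.1 w z ∧
      (Q.1 0 = Q'.1 0 ∨ (z = Q.1 0 ∧ w = Q'.1 0)) ∧
      ∀ (P : Profile D n) (i : Fin n) (a : Fin m), a ≠ z → a ≠ w →
        (φ (Function.update P i Q)).1 a = (φ (Function.update P i Q')).1 a := by
  obtain ⟨_, k, hk, h1, h2, h3⟩ := h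
  set k0 : Fin m := ⟨k, Nat.lt_of_succ_lt hk⟩ with hk0
  set k1 : Fin m := ⟨k + 1, hk⟩ with hk1
  have hne : k0 ≠ k1 := by simp [hk0, hk1]
  have hlt : k0 < k1 := by simp [hk0, hk1, Fin.lt_def]
  refine ⟨Q.1 k0, Q.1 k1, fun e => hne (Q.1.injective e), ?_, ?_, ?_, ?_⟩
  · simpa [Prefers] using hlt
  · rw [h1, h2]; simpa [Prefers] using hlt
  · by_cases hk : k = 0
    · right
      have : k0 = 0 := by ext; simp [hk0, hk]
      rw [h2, this]; exact ⟨rfl, rfl⟩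
    · left
      apply h3 <;> simp <;> omega
  · intro P i a ha hb
    obtain ⟨t, rfl⟩ := Q.1.surjective a
    have ht0 : (t : ℕ) ≠ k := fun e => ha (by congr 1; ext; exact e)
    have ht1 : (t : ℕ) ≠ k + 1 := fun e => hb (by congr 1; ext; exact e)
    have key : ∀ (lam : Lottery m) (j : ℕ), j ≠ k + 1 → topSum lam Q.1 j = topSum lam Q'.1 j := by
      intro lam j hj
      rw [topSum_eq, topSum_eq]
      refine Finset.sum_congr rfl fun a _ => ?_
      obtain ⟨s, rfl⟩ := Q.1.surjective a
      have : ((s : ℕ) < j) ↔ ((Q'.1.symm (Q.1 s) : Fin m) : ℕ) < j := by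
        by_cases e0 : (s : ℕ) = k
        · have : s = k0 := Fin.ext e0
          subst this
          rw [h1]; simp [hk0, hk1]; omega
        by_cases e1 : (s : ℕ) = k + 1
        · have : s = k1 := Fin.ext e1
          subst this
          rw [h2]; simp [hk0, hk1]; omega
        · rw [h3 s e0 e1]; simp
      simp [← this]
    have key2 : ∀ j, j ≤ m → j ≠ k + 1 →
        topSum (φ (Function.update P i Q)) Q.1 j = topSum (φ (Function.update P i Q')) Q.1 j := by
      intro j hj hjk
      apply le_antisymm
      · have := hsp i (Function.update P i Q') Q j hj
        simp only [Function.update_idem, Function.update_self] at this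
        rwa [key _ j hjk, key _ j hjk]
      · have := hsp i (Function.update P i Q) Q' j hj
        simpa only [Function.update_idem, Function.update_self] using this
    have e1 := key2 (t + 1) t.2 (by omega)
    have e2 := key2 t t.2.le (by omega)
    rw [topSum_succ, topSum_succ, e2] at e1
    linarith

lemma pref_ne {P : Pref m} {a b : Fin m} (h : Prefers P a b) : a ≠ b := by
  rintro rfl; exact lt_irrefl _ h

lemma pref_of_not {P : Pref m} {a b : Fin m} (hab : a ≠ b) (h : ¬ Prefers P a b) :
    Prefers P b a := by
  unfold Prefers at *
  exact lt_of_le_of_ne (not_lt.1 h) (fun e => hab (P.symm.injective e.symm))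

lemma pref_top [NeZero m] (P : Pref m) {b : Fin m} (h : b ≠ P 0) : Prefers P (P 0) b := by
  unfold Prefers
  rw [Equiv.symm_apply_apply]
  rw [Fin.pos_iff_ne_zero]
  intro e
  exact h (by rw [← e]; simp)

lemma pref_not_top [NeZero m] {P : Pref m} {a : Fin m} : ¬ Prefers P a (P 0) := by
  unfold Prefers
  simp

lemma halfspace {D : Set (Pref m)} (hD : NoRestorationDomain D) (x y : Fin m) (R R' : D)
    (h : Prefers R.1 x y) (h' : Prefers R'.1 x y) :
    Relation.ReflTransGen (fun Q Q' : D => Adjacent Q.1 Q'.1 ∧ Prefers Q.1 x y ∧ Prefers Q'.1 x y)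
      R R' := by
  by_cases e : R = R'
  · subst e; exact Relation.ReflTransGen.refl
  obtain ⟨π, v, ⟨hv, hmem, -, h0, hl, hadj⟩, hnr⟩ :=
    hD R.1 R.2 R'.1 R'.2 (fun e' => e (Subtype.ext e')) x y
  have hp : ∀ j, j < v → Prefers (π j) x y := by
    intro j hj
    by_contra hc
    have hc' := pref_of_not (pref_ne h) hc
    rcases Nat.eq_zero_or_pos j with rfl | hj0
    · rw [h0] at hc; exact hc h
    rcases Nat.lt_or_ge j (v - 1) with hjl | hjl
    · exact (hnr 0 j (v - 1) hj0 hjl (by omega)).1 ⟨h0 ▸ h, hc', hl ▸ h'⟩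
    · have : j = v - 1 := by omega
      subst this; rw [hl] at hc; exact hc h'
  have hall : ∀ j (hj : j < v), Relation.ReflTransGen
      (fun Q Q' : D => Adjacent Q.1 Q'.1 ∧ Prefers Q.1 x y ∧ Prefers Q'.1 x y)
      R ⟨π j, hmem j hj⟩ := by
    intro j
    induction j with
    | zero =>
      intro hj
      have : R = ⟨π 0, hmem 0 hj⟩ := Subtype.ext h0.symm
      rw [← this]
    | succ j ih =>
      intro hj
      exact (ih (by omega)).tail ⟨hadj j hj, hp j (by omega), hp _ hj⟩
  have := hall (v - 1) (by omega)
  have e2 : (⟨π (v - 1), hmem (v - 1) (by omega)⟩ : D) = R' := Subtype.ext hl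
  rwa [e2] at this

lemma same_top_adj [NeZero m] {D : Set (Pref m)} (hD : NoRestorationDomain D)
    {φ : Profile D n → Lottery m} (hu : Unanimous φ)
    (hsp : StrategyProof φ) (Q Q' : D) (h : Adjacent Q.1 Q'.1) (htop : Q.1 0 = Q'.1 0)
    (P : Profile D n) (i : Fin n) (a : Fin m) :
    (φ (Function.update P i Q)).1 a = (φ (Function.update P i Q')).1 a := by
  classical
  obtain ⟨z, w, hzw, hz, hw, -, hloc⟩ := adj_struct hsp Q Q' h
  have hsum : ∀ P : Profile D n,
      (φ (Function.update P i Q)).1 z - (φ (Function.update P i Q')).1 z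
      = (φ (Function.update P i Q')).1 w - (φ (Function.update P i Q)).1 w := by
    intro P
    have s1 := (φ (Function.update P i Q)).2.2
    have s2 := (φ (Function.update P i Q')).2.2
    have : ∑ a, ((φ (Function.update P i Q)).1 a - (φ (Function.update P i Q')).1 a) = 0 := by
      rw [Finset.sum_sub_distrib, s1, s2, sub_self]
    rw [Finset.sum_eq_add z w hzw] at this
    · linarith
    · intro c _ hc
      rw [hloc P i c hc.1 hc.2, sub_self]
    · simp
    · simp
  set d : Profile D n → ℝ := fun P =>
    (φ (Function.update P i Q)).1 z - (φ (Function.update P i Q')).1 z with hd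
  have hchain : ∀ (x y : Fin m), (x = z ∧ y = w ∨ x = w ∧ y = z) →
      ∀ (P : Profile D n) (j : Fin n), j ≠ i → ∀ R R' : D,
      Prefers R.1 x y → Prefers R'.1 x y →
      d (Function.update P j R) = d (Function.update P j R') := by
    intro x y hxy P j hj R R' hR hR'
    have hp := halfspace hD x y R R' hR hR'
    clear hR'
    induction hp with
    | refl => rfl
    | tail _ hstep ih =>
      rename_i Q1 Q2 _
      rw [ih]
      obtain ⟨hadj, hp1, hp2⟩ := hstep
      obtain ⟨z', w', hzw', hz', hw', -, hloc'⟩ := adj_struct hsp Q1 Q2 hadj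
      have hor : (z ≠ z' ∧ z ≠ w') ∨ (w ≠ z' ∧ w ≠ w') := by
        have a1 : ¬ (z' = x ∧ w' = y) := by
          rintro ⟨rfl, rfl⟩; exact lt_asymm hp2 hw'
        have a2 : ¬ (z' = y ∧ w' = x) := by
          rintro ⟨rfl, rfl⟩; exact lt_asymm hp1 hz'
        rcases hxy with ⟨rfl, rfl⟩ | ⟨rfl, rfl⟩ <;> grind
      rcases hor with ⟨b1, b2⟩ | ⟨b1, b2⟩
      · simp only [hd]
        rw [Function.update_comm hj, Function.update_comm hj, Function.update_comm hj,
          Function.update_comm hj, hloc' _ j z b1 b2, hloc' _ j z b1 b2]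
      · simp only [hd]
        rw [hsum, hsum]
        rw [Function.update_comm hj, Function.update_comm hj, Function.update_comm hj,
          Function.update_comm hj, hloc' _ j w b1 b2, hloc' _ j w b1 b2]
  have hstep : ∀ (P : Profile D n) (j : Fin n), ∃ R : D, R.1 0 = Q.1 0 ∧
      d P = d (Function.update P j R) := by
    intro P j
    by_cases hj : j = i
    · subst hj
      exact ⟨Q, rfl, by simp [hd]⟩
    by_cases hp : Prefers (P j).1 z w
    · refine ⟨Q, rfl, ?_⟩
      have := hchain z w (Or.inl ⟨rfl, rfl⟩) P j hj (P j) Q hp hz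
      rwa [Function.update_eq_self] at this
    · refine ⟨Q', htop.symm, ?_⟩
      have := hchain w z (Or.inr ⟨rfl, rfl⟩) P j hj (P j) Q' (pref_of_not hzw hp) hw
      rwa [Function.update_eq_self] at this
  have hind : ∀ J : Finset (Fin n), ∃ P' : Profile D n, (∀ j ∈ J, (P' j).1 0 = Q.1 0) ∧
      d P = d P' := by
    intro J
    induction J using Finset.induction_on with
    | empty => exact ⟨P, by simp, rfl⟩
    | insert j J _ ih =>
      obtain ⟨P', h1, h2⟩ := ih
      obtain ⟨R, hR, hdR⟩ := hstep P' j
      refine ⟨Function.update P' j R, ?_, h2.trans hdR⟩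
      intro j' hj'
      by_cases e : j' = j
      · subst e; simpa using hR
      · rw [Function.update_of_ne e]
        exact h1 j' (Finset.mem_of_mem_insert_of_ne hj' e)
  obtain ⟨P', hP', hdP⟩ := hind Finset.univ
  have hd0 : d P = 0 := by
    rw [hdP]
    simp only [hd]
    rw [hu (Function.update P' i Q) (Q.1 0), hu (Function.update P' i Q') (Q.1 0), sub_self]
    · intro j
      unfold topOf
      by_cases e : j = i
      · subst e; simpa using htop.symm
      · rw [Function.update_of_ne e]; exact hP' j (Finset.mem_univ _)
    · intro j
      unfold topOf
      by_cases e : j = i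
      · subst e; simp
      · rw [Function.update_of_ne e]; exact hP' j (Finset.mem_univ _)
  by_cases e1 : a = z
  · subst e1; exact sub_eq_zero.1 hd0
  by_cases e2 : a = w
  · subst e2
    have := hsum P
    simp only [hd] at hd0
    linarith
  · exact hloc P i a e1 e2

lemma star [NeZero m] {D : Set (Pref m)} (hD : NoRestorationDomain D)
    {φ : Profile D n → Lottery m} (hu : Unanimous φ)
    (hsp : StrategyProof φ) (a x : Fin m) (Q Q' : D) (h : Prefers Q.1 a x)
    (h' : Prefers Q'.1 a x) (P : Profile D n) (i : Fin n) :
    (φ (Function.update P i Q)).1 x = (φ (Function.update P i Q')).1 x := by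
  have hp := halfspace hD a x Q Q' h h'
  clear h'
  induction hp with
  | refl => rfl
  | tail _ hstep ih =>
    rename_i Q1 Q2 _
    rw [ih]
    obtain ⟨hadj, hp1, hp2⟩ := hstep
    obtain ⟨z, w, _, _, _, hor, hloc⟩ := adj_struct hsp Q1 Q2 hadj
    rcases hor with e | ⟨rfl, rfl⟩
    · exact same_top_adj hD hu hsp Q1 Q2 hadj e P i x
    · apply hloc
      · rintro rfl; exact pref_not_top hp1
      · rintro rfl; exact pref_not_top hp2


/-- The probability of `x` is unaffected when one voter moves between tops `s` and `t`. -/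
def EE (g : (Fin n → Fin m) → Fin m → ℝ) (x s t : Fin m) : Prop :=
  ∀ (T : Fin n → Fin m) (i : Fin n), g (Function.update T i s) x = g (Function.update T i t) x

lemma EE.refl (g : (Fin n → Fin m) → Fin m → ℝ) (x s : Fin m) : EE g x s s := fun _ _ => rfl

lemma EE.symm {g : (Fin n → Fin m) → Fin m → ℝ} {x s t : Fin m} (h : EE g x s t) :
    EE g x t s := fun T i => (h T i).symm

lemma EE.trans {g : (Fin n → Fin m) → Fin m → ℝ} {x s t u : Fin m} (h : EE g x s t)
    (h' : EE g x t u) : EE g x s u := fun T i => (h T i).trans (h' T i)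

lemma move {g : (Fin n → Fin m) → Fin m → ℝ} {x : Fin m} {T T' : Fin n → Fin m}
    (h : ∀ i, EE g x (T i) (T' i)) : g T x = g T' x := by
  classical
  have : ∀ J : Finset (Fin n), g T x = g (fun i => if i ∈ J then T' i else T i) x := by
    intro J
    induction J using Finset.induction_on with
    | empty => simp
    | insert j J hj ih =>
      rw [ih]
      have e1 : (fun i => if i ∈ J then T' i else T i)
          = Function.update (fun i => if i ∈ J then T' i else T i) j (T j) := by
        funext i
        by_cases e : i = j
        · subst e; simp [hj]
        · simp [e]
      have e2 : (fun i => if i ∈ insert j J then T' i else T i)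
          = Function.update (fun i => if i ∈ J then T' i else T i) j (T' j) := by
        funext i
        by_cases e : i = j
        · subst e; simp
        · simp [e]
      rw [e1, e2]
      exact h j _ _
  simpa using this Finset.univ

/-- profile with `S` at `a` and the rest at `b` -/
def tw (S : Finset (Fin n)) (a b : Fin m) : Fin n → Fin m := fun i => if i ∈ S then a else b

lemma tri {g : (Fin n → Fin m) → Fin m → ℝ} (hsum : ∀ T, ∑ x, g T x = 1)
    (hun : ∀ a x, x ≠ a → g (fun _ => a) x = 0) {p u v : Fin m}
    (hpu : p ≠ u) (hpv : p ≠ v) (huv : u ≠ v)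
    (Eu : ∀ x, x ≠ p → x ≠ u → EE g x p u) (Ev : ∀ x, x ≠ p → x ≠ v → EE g x p v)
    (Ep : EE g p u v) (S S' : Finset (Fin n)) (hd : Disjoint S S') :
    g (tw S u p) p + g (tw S' u p) p = 1 + g (tw (S ∪ S') u p) p := by
  classical
  have two : ∀ (u : Fin m), p ≠ u → (∀ x, x ≠ p → x ≠ u → EE g x p u) → ∀ S : Finset (Fin n),
      g (tw S u p) u = 1 - g (tw S u p) p := by
    intro u hpu Eu S
    have h := hsum (tw S u p)
    rw [Finset.sum_eq_add p u hpu] at h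
    · linarith
    · intro c _ hc
      rw [← hun p c hc.1]
      apply move
      intro i
      unfold tw
      split_ifs
      · exact (Eu c hc.1 hc.2).symm
      · exact EE.refl _ _ _
    · simp
    · simp
  set T : Fin n → Fin m := fun i => if i ∈ S then u else if i ∈ S' then v else p with hT
  have h1 : g T u = g (tw S u p) u := by
    apply move
    intro i
    simp only [hT, tw]
    split_ifs
    · exact EE.refl _ _ _
    · exact (Ev u hpu.symm huv).symm
    · exact EE.refl _ _ _
  have h2 : g T v = g (tw S' v p) v := by
    apply move
    intro i
    simp only [hT, tw]
    by_cases a : i ∈ S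
    · have : i ∉ S' := Finset.disjoint_left.1 hd a
      simp only [a, this, if_true, if_false]
      exact (Eu v hpv.symm huv.symm).symm
    · simp only [a, if_false]
      exact EE.refl _ _ _
  have h3 : g T p = g (tw (S ∪ S') u p) p := by
    apply move
    intro i
    simp only [hT, tw, Finset.mem_union]
    by_cases a : i ∈ S
    · simp only [a, true_or, if_true]; exact EE.refl _ _ _
    by_cases b : i ∈ S'
    · simp only [a, b, or_true, if_true, if_false]; exact Ep.symm
    · simp only [a, b, or_self, if_false]; exact EE.refl _ _ _
  have h4 : g (tw S' v p) p = g (tw S' u p) p := by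
    apply move
    intro i
    simp only [tw]
    split_ifs
    · exact Ep.symm
    · exact EE.refl _ _ _
  have h5 : ∀ x, x ≠ p → x ≠ u → x ≠ v → g T x = 0 := by
    intro x a b c
    rw [← hun p x a]
    apply move
    intro i
    simp only [hT]
    split_ifs
    · exact (Eu x a b).symm
    · exact (Ev x a c).symm
    · exact EE.refl _ _ _
  have hs := hsum T
  have hs2 : ∑ x, g T x = ∑ x ∈ ({p, u, v} : Finset (Fin m)), g T x := by
    symm
    apply Finset.sum_subset (Finset.subset_univ _)
    intro x _ hx
    simp only [Finset.mem_insert, Finset.mem_singleton, not_or] at hx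
    exact h5 x hx.1 hx.2.1 hx.2.2
  rw [hs2, Finset.sum_insert (by simp [hpu, hpv]), Finset.sum_insert (by simp [huv]),
    Finset.sum_singleton, h1, h2, h3, two u hpu Eu, two v hpv Ev, h4] at hs
  linarith

lemma core {g : (Fin n → Fin m) → Fin m → ℝ} (hnn : ∀ T x, 0 ≤ g T x)
    (hsum : ∀ T, ∑ x, g T x = 1)
    (hun : ∀ a x, x ≠ a → g (fun _ => a) x = 0) {p q u v u' v' : Fin m} (hpq : p < q)
    (hup : p < u) (hvp : p < v) (huv : u ≠ v)
    (Eu : ∀ x, x ≠ p → x ≠ u → EE g x p u) (Ev : ∀ x, x ≠ p → x ≠ v → EE g x p v)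
    (hup' : u' < q) (hvp' : v' < q) (huv' : u' ≠ v')
    (Eu' : ∀ x, x ≠ q → x ≠ u' → EE g x q u') (Ev' : ∀ x, x ≠ q → x ≠ v' → EE g x q v')
    (Ep : ∀ s t, p < s → p < t → EE g p s t)
    (Eq : ∀ s t, s < q → t < q → EE g q s t)
    (hmid : ∀ x, p < x → x < q → ∀ y, y ≠ x → EE g x y p ∨ EE g x y q)
    (hout : ∀ y, y < p ∨ q < y → ∀ s t, p ≤ s → s ≤ q → p ≤ t → t ≤ q → EE g y s t)
    (x : Fin m) (hx1 : p < x) (hx2 : x < q) (T : Fin n → Fin m) :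
    g T x = 1 - g (tw (Finset.univ.filter (fun i => T i = x)) q p) p := by
  classical
  have aP : ∀ S S' : Finset (Fin n), Disjoint S S' →
      g (tw S q p) p + g (tw S' q p) p = 1 + g (tw (S ∪ S') q p) p := by
    have c : ∀ S : Finset (Fin n), g (tw S q p) p = g (tw S u p) p := by
      intro S
      apply move
      intro i; simp only [tw]; split_ifs
      · exact Ep _ _ hpq hup
      · exact EE.refl _ _ _
    intro S S' hd
    rw [c, c, c]
    exact tri hsum hun hup.ne hvp.ne huv Eu Ev (Ep _ _ hup hvp) S S' hd
  have aQ : ∀ S : Finset (Fin n), g (tw S q p) q + g (tw Sᶜ q p) q = 1 := by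
    have c : ∀ S : Finset (Fin n), g (tw S q p) q = g (tw Sᶜ u' q) q := by
      intro S
      apply move
      intro i; simp only [tw, Finset.mem_compl]
      by_cases h : i ∈ S
      · simp only [h, not_true, if_true, if_false]; exact EE.refl _ _ _
      · simp only [h, not_false_iff, if_true, if_false]; exact Eq _ _ hpq hup'
    intro S
    rw [c, c]
    rw [tri hsum hun hup'.ne' hvp'.ne' huv' Eu' Ev' (Eq _ _ hup' hvp') Sᶜ Sᶜᶜ
      disjoint_compl_right]
    have : tw (Sᶜ ∪ Sᶜᶜ) u' q = fun _ : Fin n => u' := by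
      funext i; simp [tw]
    rw [this, hun u' q hup'.ne', add_zero]
  have aP' : ∀ S : Finset (Fin n), g (tw S q p) p + g (tw Sᶜ q p) p = 1 := by
    intro S
    rw [aP S Sᶜ disjoint_compl_right]
    have : tw (S ∪ Sᶜ) q p = fun _ : Fin n => q := by
      funext i; simp [tw]
    rw [this, hun q p hpq.ne, add_zero]
  have le1 : ∀ T (B : Finset (Fin m)), ∑ y ∈ B, g T y ≤ 1 := by
    intro T B
    rw [← hsum T]
    exact Finset.sum_le_sum_of_subset_of_nonneg (Finset.subset_univ _) (fun y _ _ => hnn T y)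
  have hPQ : ∀ S : Finset (Fin n), g (tw S q p) p + g (tw S q p) q = 1 := by
    intro S
    have b1 := le1 (tw S q p) {p, q}
    have b2 := le1 (tw Sᶜ q p) {p, q}
    rw [Finset.sum_pair hpq.ne] at b1 b2
    have := aQ S
    have := aP' S
    linarith
  have hz : ∀ (S : Finset (Fin n)) y, y ≠ p → y ≠ q → g (tw S q p) y = 0 := by
    intro S y h1 h2
    have b1 := le1 (tw S q p) {y, p, q}
    rw [Finset.sum_insert (by simp [h1, h2]), Finset.sum_pair hpq.ne, hPQ] at b1
    have := hnn (tw S q p) y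
    linarith
  -- reduce the profile
  set K := Finset.univ.filter (fun i => T i = x) with hK
  set S := Finset.univ.filter (fun i => T i ≠ x ∧ ¬ EE g x (T i) p) with hS
  set T' : Fin n → Fin m := fun i => if i ∈ K then x else if i ∈ S then q else p with hT'
  have hTT : g T x = g T' x := by
    apply move
    intro i
    simp only [hT', hK, hS, Finset.mem_filter, Finset.mem_univ, true_and]
    by_cases a : T i = x
    · simp only [a, if_true]; exact EE.refl _ _ _
    by_cases b : EE g x (T i) p
    · simp only [a, b, if_false, not_true, and_false]
    · simp only [a, b, if_false, not_false_iff, ne_eq, and_self, if_true]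
      exact (hmid x hx1 hx2 _ a).resolve_left b
  have hd : Disjoint S K := by
    rw [Finset.disjoint_left]
    intro i a b
    simp only [hK, hS, Finset.mem_filter] at a b
    exact a.2.1 b.2
  have m1 : ∀ y, EE g y x q → g T' y = g (tw (S ∪ K) q p) y := by
    intro y hy
    apply move
    intro i
    simp only [hT', tw, Finset.mem_union]
    by_cases a : i ∈ K
    · simp only [a, or_true, if_true]; exact hy
    · simp only [a, or_false, if_false]; exact EE.refl _ _ _
  have m2 : ∀ y, EE g y x p → g T' y = g (tw S q p) y := by
    intro y hy
    apply move
    intro i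
    simp only [hT', tw]
    by_cases a : i ∈ K
    · have : i ∉ S := Finset.disjoint_right.1 hd a
      simp only [a, this, if_true, if_false]; exact hy
    · simp only [a, if_false]; exact EE.refl _ _ _
  have e1 := m1 p (Ep _ _ hx1 hpq)
  have e2 := m2 q (Eq _ _ hx2 hpq)
  have e3 : ∀ y, y ≠ p → y ≠ q → y ≠ x → g T' y = 0 := by
    intro y h1 h2 h3
    by_cases o : y < p ∨ q < y
    · rw [m2 y (hout y o _ _ hx1.le hx2.le le_rfl hpq.le), hz _ y h1 h2]
    · push Not at o
      rcases hmid y (lt_of_le_of_ne o.1 h1.symm) (lt_of_le_of_ne o.2 h2) x h3.symm with h | h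
      · rw [m2 y h, hz _ y h1 h2]
      · rw [m1 y h, hz _ y h1 h2]
  have hs := hsum T'
  have hs2 : ∑ y, g T' y = ∑ y ∈ ({p, q, x} : Finset (Fin m)), g T' y := by
    symm
    apply Finset.sum_subset (Finset.subset_univ _)
    intro y _ hy
    simp only [Finset.mem_insert, Finset.mem_singleton, not_or] at hy
    exact e3 y hy.1 hy.2.1 hy.2.2
  rw [hs2, Finset.sum_insert (by simp [hpq.ne, hx1.ne]), Finset.sum_insert (by simp [hx2.ne']),
    Finset.sum_singleton, e1, e2] at hs
  have := aP S K hd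
  have := hPQ S
  rw [hTT]
  linarith

lemma chain_inv {R : Fin m → Fin m → Prop} {I : Fin m → Prop} {l : List (Fin m)}
    (h : List.IsChain R l) (hI : ∀ y ∈ l, ∀ z ∈ l, R y z → (I y ↔ I z)) :
    ∀ y ∈ l, ∀ z ∈ l, (I y ↔ I z) := by
  induction l with
  | nil => simp
  | cons a l ih =>
    have key : ∀ y ∈ a :: l, (I a ↔ I y) := by
      intro y hy
      cases l with
      | nil => simp at hy; rw [hy]
      | cons b l =>
        rw [List.isChain_cons_cons] at h
        have ihh := ih h.2 (fun y hy z hz => hI y (List.mem_cons_of_mem _ hy) z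
          (List.mem_cons_of_mem _ hz))
        rcases List.mem_cons.1 hy with rfl | hy
        · rfl
        · exact (hI a (by simp) b (by simp) h.1).trans (ihh b (by simp) y hy)
    intro y hy z hz
    exact (key y hy).symm.trans (key z hz)

lemma path_split [NeZero m] {D : Set (Pref m)} {p q : Fin m} (hstar : IsHybridStar D p q)
    (k x : Fin m) (hkx : k ≠ x) :
    (∃ l, List.IsChain (StronglyConnected D) l ∧ x ∉ l ∧ k ∈ l ∧ (0 : Fin m) ∈ l) ∨
    (∃ l, List.IsChain (StronglyConnected D) l ∧ x ∉ l ∧ k ∈ l ∧ lastAlt m ∈ l) := by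
  by_cases h0 : k = 0
  · left; exact ⟨[k], by simp, by simpa using hkx.symm, by simp, by simp [h0]⟩
  by_cases h1 : k = lastAlt m
  · right; exact ⟨[k], by simp, by simpa using hkx.symm, by simp, by simp [h1]⟩
  obtain ⟨l, ⟨⟨hne, hnd, -, hch⟩, hh, hl⟩, hk⟩ := hstar.2.1 k h0 h1
  have hch : List.IsChain (StronglyConnected D) l := hch
  obtain ⟨l1, l2, rfl⟩ := List.append_of_mem hk
  by_cases hx : x ∈ l1
  · right
    refine ⟨k :: l2, hch.right_of_append, ?_, by simp, ?_⟩
    · intro hx2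
      exact (List.nodup_append.1 hnd).2.2 x hx x hx2 rfl
    · have : (l1 ++ k :: l2).getLast? = (k :: l2).getLast? := by
        rw [List.getLast?_append]
        rw [List.getLast?_eq_some_getLast (List.cons_ne_nil k l2)]
        rfl
      rw [this] at hl
      exact List.mem_of_getLast? hl
  · left
    refine ⟨l1 ++ [k], ?_, by simp [hx, hkx.symm], by simp, ?_⟩
    · have : l1 ++ k :: l2 = (l1 ++ [k]) ++ l2 := by simp
      rw [this] at hch
      exact hch.left_of_append
    · have : (l1 ++ k :: l2).head? = (l1 ++ [k]).head? := by cases l1 <;> simp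
      rw [this] at hh
      exact List.mem_of_head? hh

lemma SC.symm [NeZero m] {D : Set (Pref m)} {a b : Fin m} (h : StronglyConnected D a b) :
    StronglyConnected D b a := by
  obtain ⟨h, P, hP, P', hP', h1, h2, h3, h4, h5⟩ := h
  exact ⟨h.symm, P', hP', P, hP, h3, h4, h1, h2, fun k hk => (h5 k hk).symm⟩

lemma first_of_pref_second [NeZero m] (hm : 3 ≤ m) {P : Pref m} {a b c : Fin m}
    (h0 : P 0 = a) (h1 : P 1 = b) (h : Prefers P c b) : c = a := by
  unfold Prefers at h
  rw [← h1, Equiv.symm_apply_apply] at h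
  have : P.symm c = 0 := by
    apply Fin.ext
    have h' : ((P.symm c : Fin m) : ℕ) < ((1 : Fin m) : ℕ) := h
    have h1' : ((1 : Fin m) : ℕ) = 1 % m := rfl
    rw [h1', Nat.mod_eq_of_lt (by omega)] at h'
    have h0' : ((0 : Fin m) : ℕ) = 0 := by simp
    rw [h0']
    exact Nat.lt_one_iff.1 h'
  rw [← h0, ← this]; simp

lemma nocross_p [NeZero m] (hm : 3 ≤ m) {D : Set (Pref m)} {p q : Fin m} (hpq : p < q)
    (hstar : IsHybridStar D p q) {a b : Fin m} (ha : a < p) (hb : p < b) :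
    ¬ StronglyConnected D a b := by
  rintro ⟨h, P, hP, P', hP', h1, h2, h3, h4, h5⟩
  obtain ⟨hi, hii, hiii⟩ := hstar.1 hP
  by_cases hbq : b ≤ q
  · have := hii (h1 ▸ ha.le) b hb.le hbq hb.ne'
    exact ha.ne' (first_of_pref_second hm h1 h2 this)
  · push Not at hbq
    have := hi b q (Or.inr ⟨hbq.le, le_rfl⟩) (Or.inr ⟨h1 ▸ ha.trans hpq, hbq⟩)
    exact (ha.trans hpq).ne' (first_of_pref_second hm h1 h2 this)

lemma nocross_q [NeZero m] (hm : 3 ≤ m) {D : Set (Pref m)} {p q : Fin m} (hpq : p < q)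
    (hstar : IsHybridStar D p q) {a b : Fin m} (ha : a < q) (hb : q < b) :
    ¬ StronglyConnected D a b := by
  rintro ⟨h, P', hP', P, hP, h3, h4, h1, h2, h5⟩
  obtain ⟨hi, hii, hiii⟩ := hstar.1 hP
  by_cases hbq : p ≤ a
  · have := hiii (h1 ▸ hb.le) a hbq ha.le ha.ne
    exact hb.ne (first_of_pref_second hm h1 h2 this)
  · push Not at hbq
    have := hi a p (Or.inl ⟨hbq.le, le_rfl⟩) (Or.inl ⟨hbq, h1 ▸ hpq.trans hb⟩)
    exact (hpq.trans hb).ne (first_of_pref_second hm h1 h2 this)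

lemma nbrs [NeZero m] {D : Set (Pref m)} {p q c b : Fin m} (hcM : c ∈ Set.Icc p q)
    (hl : ¬ IsLeaf D (Set.Icc p q) c) (hb : b ∈ Set.Icc p q) (hcb : StronglyConnected D c b) :
    ∃ b', b ≠ b' ∧ b' ∈ Set.Icc p q ∧ StronglyConnected D c b' := by
  by_contra hc
  push Not at hc
  exact hl ⟨hcM, b, ⟨hb, hcb⟩, fun y hy => by
    by_contra hne
    exact hc y (fun e => hne e.symm) hy.1 hy.2⟩

lemma nbr_p [NeZero m] (hm : 3 ≤ m) {D : Set (Pref m)} {p q : Fin m}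
    (hgap : (p : ℕ) + 1 < (q : ℕ)) (hstar : IsHybridStar D p q) :
    ∃ u v, p < u ∧ p < v ∧ u ≠ v ∧ StronglyConnected D p u ∧ StronglyConnected D p v := by
  have hpq : p < q := by rw [Fin.lt_def]; omega
  have hq := q.2
  let k : Fin m := ⟨p + 1, by omega⟩
  obtain ⟨l, ⟨⟨hne, hnd, -, hch⟩, hh, hl⟩, hk⟩ := hstar.2.1 k
    (by intro e; have := congrArg Fin.val e; simp [k] at this) (by intro e; have := congrArg Fin.val e; simp [k, lastAlt] at this; omega)
  have hch : List.IsChain (StronglyConnected D) l := hch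
  have h0 := List.mem_of_head? hh
  have hex : ∃ b, p < b ∧ StronglyConnected D p b := by
    by_contra hc
    push Not at hc
    have aux : ∀ y z, StronglyConnected D y z → y ≤ p → z ≤ p := by
      intro y z hyz hy
      by_contra hz
      push Not at hz
      rcases eq_or_lt_of_le hy with rfl | hy
      · exact hc z hz hyz
      · exact nocross_p hm hpq hstar hy hz hyz
    have := chain_inv (I := fun y => y ≤ p) hch
      (fun y _ z _ hyz => ⟨aux y z hyz, aux z y (SC.symm hyz)⟩) 0 h0 k hk
    have h2 := this.1 (Fin.zero_le _)
    rw [Fin.le_def] at h2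
    simp [k] at h2
  obtain ⟨b, hb, hpb⟩ := hex
  have hbq : b ≤ q := by
    by_contra h
    push Not at h
    exact nocross_q hm hpq hstar hpq h hpb
  obtain ⟨b', h1, h2, h3⟩ := nbrs ⟨le_rfl, hpq.le⟩ (hstar.2.2 hgap p) ⟨hb.le, hbq⟩ hpb
  exact ⟨b, b', hb, lt_of_le_of_ne h2.1 h3.1, h1, hpb, h3⟩

lemma nbr_q [NeZero m] (hm : 3 ≤ m) {D : Set (Pref m)} {p q : Fin m}
    (hgap : (p : ℕ) + 1 < (q : ℕ)) (hstar : IsHybridStar D p q) :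
    ∃ u v, u < q ∧ v < q ∧ u ≠ v ∧ StronglyConnected D q u ∧ StronglyConnected D q v := by
  have hpq : p < q := by rw [Fin.lt_def]; omega
  have hq := q.2
  let k : Fin m := ⟨p + 1, by omega⟩
  obtain ⟨l, ⟨⟨hne, hnd, -, hch⟩, hh, hl⟩, hk⟩ := hstar.2.1 k
    (by intro e; have := congrArg Fin.val e; simp [k] at this) (by intro e; have := congrArg Fin.val e; simp [k, lastAlt] at this; omega)
  have hch : List.IsChain (StronglyConnected D) l := hch
  have h0 := List.mem_of_getLast? hl
  have hex : ∃ b, b < q ∧ StronglyConnected D q b := by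
    by_contra hc
    push Not at hc
    have aux : ∀ y z, StronglyConnected D y z → q ≤ y → q ≤ z := by
      intro y z hyz hy
      by_contra hz
      push Not at hz
      rcases eq_or_lt_of_le hy with rfl | hy
      · exact hc z hz hyz
      · exact nocross_q hm hpq hstar hz hy (SC.symm hyz)
    have := chain_inv (I := fun y => q ≤ y) hch
      (fun y _ z _ hyz => ⟨aux y z hyz, aux z y (SC.symm hyz)⟩) (lastAlt m) h0 k hk
    have h2 := this.1 (by rw [Fin.le_def]; simp [lastAlt]; omega)
    rw [Fin.le_def] at h2
    simp [k] at h2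
    omega
  obtain ⟨b, hb, hpb⟩ := hex
  have hbq : p ≤ b := by
    by_contra h
    push Not at h
    exact nocross_p hm hpq hstar h hpq (SC.symm hpb)
  obtain ⟨b', h1, h2, h3⟩ := nbrs ⟨hpq.le, le_rfl⟩ (hstar.2.2 hgap q) ⟨hbq, hb.le⟩ hpb
  exact ⟨b, b', hb, lt_of_le_of_ne h2.2 h3.1.symm, h1, hpb, h3⟩

lemma tops_only [NeZero m] {D : Set (Pref m)} (hD : NoRestorationDomain D)
    {φ : Profile D n → Lottery m} (hu : Unanimous φ)
    (hsp : StrategyProof φ) (Q Q' : D) (h : Q.1 0 = Q'.1 0) (P : Profile D n) (i : Fin n)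
    (x : Fin m) :
    (φ (Function.update P i Q)).1 x = (φ (Function.update P i Q')).1 x := by
  have hne : ∀ x, x ≠ Q.1 0 →
      (φ (Function.update P i Q)).1 x = (φ (Function.update P i Q')).1 x := by
    intro x hx
    exact star hD hu hsp (Q.1 0) x Q Q' (pref_top _ hx) (h ▸ pref_top _ (h ▸ hx)) P i
  by_cases hx : x = Q.1 0
  · have s1 := (φ (Function.update P i Q)).2.2
    have s2 := (φ (Function.update P i Q')).2.2
    rw [← Finset.add_sum_erase _ _ (Finset.mem_univ x)] at s1 s2
    have : ∑ y ∈ Finset.univ.erase x, (φ (Function.update P i Q)).1 y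
        = ∑ y ∈ Finset.univ.erase x, (φ (Function.update P i Q')).1 y := by
      refine Finset.sum_congr rfl fun y hy => hne y ?_
      simp at hy
      rwa [← hx]
    linarith
  · exact hne x hx

lemma tops_only' [NeZero m] {D : Set (Pref m)} (hD : NoRestorationDomain D)
    {φ : Profile D n → Lottery m} (hu : Unanimous φ)
    (hsp : StrategyProof φ) (P P' : Profile D n) (h : ∀ i, (P i).1 0 = (P' i).1 0)
    (x : Fin m) : (φ P).1 x = (φ P').1 x := by
  classical
  have : ∀ J : Finset (Fin n), (φ P).1 x = (φ (fun i => if i ∈ J then P' i else P i)).1 x := by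
    intro J
    induction J using Finset.induction_on with
    | empty => simp
    | insert j J hj ih =>
      rw [ih]
      have e1 : (fun i => if i ∈ J then P' i else P i)
          = Function.update (fun i => if i ∈ J then P' i else P i) j (P j) := by
        funext i
        by_cases e : i = j
        · subst e; simp [hj]
        · simp [e]
      have e2 : (fun i => if i ∈ insert j J then P' i else P i)
          = Function.update (fun i => if i ∈ J then P' i else P i) j (P' j) := by
        funext i
        by_cases e : i = j
        · subst e; simp
        · simp [e]
      rw [e1, e2]
      exact tops_only hD hu hsp _ _ (h j) _ _ _
  simpa using this Finset.univ

end RU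


/-- On a regular `(p,q)`-hybrid* domain with `q - p > 1`, when a voter
switches between two preferences with distinct tops in `M`, the probability of any other
alternative is unchanged. -/
theorem refined_uncompromising (m n : ℕ) [NeZero m] (hm : 3 ≤ m) (hn : 2 ≤ n)
    (D : Set (Pref m)) (p q : Fin m) (hgap : (p : ℕ) + 1 < (q : ℕ))
    (hreg : RegularDomain D) (hstar : IsHybridStar D p q)
    (φ : Profile D n → Lottery m) (hu : Unanimous φ) (hsp : StrategyProof φ) :
    ∀ (i : Fin n) (P : Profile D n) (Pi Pi' : D),
      topOf Pi ≠ topOf Pi' →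
      p ≤ topOf Pi → topOf Pi ≤ q → p ≤ topOf Pi' → topOf Pi' ≤ q →
      ∀ a : Fin m, a ≠ topOf Pi → a ≠ topOf Pi' →
        (φ (Function.update P i Pi)).1 a = (φ (Function.update P i Pi')).1 a := by
  classical
  obtain ⟨hrich, -, hD⟩ := hreg
  choose rep0 hrepD hrep using hrich
  let rep : Fin m → D := fun a => ⟨rep0 a, hrepD a⟩
  have hrept : ∀ a, (rep a).1 0 = a := hrep
  let g : (Fin n → Fin m) → Fin m → ℝ := fun T x => (φ (fun i => rep (T i))).1 x
  have hpq : p < q := by rw [Fin.lt_def]; omega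
  have hg : ∀ (P : Profile D n) x, (φ P).1 x = g (fun i => topOf (P i)) x := by
    intro P x
    exact RU.tops_only' hD hu hsp _ _ (fun i => (hrept _).symm) x
  have hup : ∀ (T : Fin n → Fin m) i s, (fun j => rep (Function.update T i s j))
      = Function.update (fun j => rep (T j)) i (rep s) := by
    intro T i s
    funext j
    by_cases e : j = i
    · subst e; simp
    · simp [e]
  have hE : ∀ (a x s t : Fin m) (Q Q' : D), Q.1 0 = s → Q'.1 0 = t → Prefers Q.1 a x →
      Prefers Q'.1 a x → RU.EE g x s t := by
    intro a x s t Q Q' hQ hQ' h1 h2 T i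
    change (φ (fun j => rep (Function.update T i s j))).1 x
      = (φ (fun j => rep (Function.update T i t j))).1 x
    rw [hup, hup, RU.tops_only hD hu hsp (rep s) Q (by rw [hrept, hQ]),
      RU.tops_only hD hu hsp (rep t) Q' (by rw [hrept, hQ'])]
    exact RU.star hD hu hsp a x Q Q' h1 h2 _ i
  have hnn : ∀ T x, 0 ≤ g T x := fun T x => (φ (fun i => rep (T i))).2.1 x
  have hsum : ∀ T, ∑ x, g T x = 1 := fun T => (φ (fun i => rep (T i))).2.2
  have hun : ∀ a x, x ≠ a → g (fun _ => a) x = 0 := by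
    intro a x hx
    change (φ (fun _ => rep a)).1 x = 0
    rw [hu (fun _ => rep a) a (fun _ => hrept a)]
    simp [degLottery, hx]
  have hSC : ∀ s t, StronglyConnected D s t → ∀ x, x ≠ s → x ≠ t → RU.EE g x s t := by
    intro s t hst x h1 h2
    obtain ⟨hne, A, hA, B, hB, a0, a1, b0, b1, hk⟩ := hst
    refine hE s x s t ⟨A, hA⟩ ⟨B, hB⟩ a0 b0 ?_ ?_
    · have := RU.pref_top A (b := x) (by rw [a0]; exact h1)
      rwa [a0] at this
    · by_contra hc
      have := RU.pref_of_not (fun e => h1 e.symm) hc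
      exact h2 (RU.first_of_pref_second hm b0 b1 this)
  have hchE : ∀ (l : List (Fin m)) x, List.IsChain (StronglyConnected D) l → x ∉ l →
      ∀ y ∈ l, ∀ z ∈ l, RU.EE g x y z := by
    intro l x hl hx y hy z hz
    have := RU.chain_inv (I := fun w => RU.EE g x y w) hl (fun a ha b hb hab => by
      have := hSC a b hab x (fun e => hx (e ▸ ha)) (fun e => hx (e ▸ hb))
      exact ⟨fun h => h.trans this, fun h => h.trans this.symm⟩) y hy z hz
    exact this.1 (RU.EE.refl _ _ _)
  have hlast : ∀ y : Fin m, y ≤ lastAlt m := by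
    intro y
    rw [Fin.le_def]
    have := y.2
    simp [lastAlt]; omega
  have Ep0 : ∀ s, p < s → RU.EE g p s (lastAlt m) := by
    intro s hs
    rcases RU.path_split hstar s p hs.ne' with ⟨l, hl, hp, hsl, h0⟩ | ⟨l, hl, hp, hsl, h0⟩
    · exfalso
      have aux : ∀ y ∈ l, ∀ z ∈ l, StronglyConnected D y z → p < y → p < z := by
        intro y _ z hz hyz hy
        by_contra hc
        have hzp : z < p := lt_of_le_of_ne (not_lt.1 hc) (fun e => hp (e ▸ hz))
        exact RU.nocross_p hm hpq hstar hzp hy (RU.SC.symm hyz)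
      have := (RU.chain_inv (I := fun y => p < y) hl (fun y hy z hz h =>
        ⟨aux y hy z hz h, aux z hz y hy (RU.SC.symm h)⟩) s hsl 0 h0).1 hs
      exact absurd this (not_lt.2 (Fin.zero_le _))
    · exact hchE l p hl hp s hsl _ h0
  have Eq0 : ∀ s, s < q → RU.EE g q s 0 := by
    intro s hs
    rcases RU.path_split hstar s q hs.ne with ⟨l, hl, hp, hsl, h0⟩ | ⟨l, hl, hp, hsl, h0⟩
    · exact hchE l q hl hp s hsl _ h0
    · exfalso
      have aux : ∀ y ∈ l, ∀ z ∈ l, StronglyConnected D y z → y < q → z < q := by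
        intro y _ z hz hyz hy
        by_contra hc
        have hzp : q < z := lt_of_le_of_ne (not_lt.1 hc) (fun e => hp (e ▸ hz))
        exact RU.nocross_q hm hpq hstar hy hzp hyz
      have := (RU.chain_inv (I := fun y => y < q) hl (fun y hy z hz h =>
        ⟨aux y hy z hz h, aux z hz y hy (RU.SC.symm h)⟩) s hsl _ h0).1 hs
      exact absurd this (not_lt.2 (hlast _))
  have Ep : ∀ s t, p < s → p < t → RU.EE g p s t :=
    fun s t hs ht => (Ep0 s hs).trans (Ep0 t ht).symm
  have Eq : ∀ s t, s < q → t < q → RU.EE g q s t :=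
    fun s t hs ht => (Eq0 s hs).trans (Eq0 t ht).symm
  have hhyb : ∀ a, IsHybridPref p q (rep a).1 := fun a => hstar.1 (rep a).2
  have hmid : ∀ x, p < x → x < q → ∀ y, y ≠ x → RU.EE g x y p ∨ RU.EE g x y q := by
    intro x h1 h2 y hy
    have hp : RU.EE g x 0 p := by
      refine hE p x 0 p (rep 0) (rep p) (hrept _) (hrept _) ?_ ?_
      · exact (hhyb 0).2.1 (by rw [hrept]; exact Fin.zero_le _) x h1.le h2.le h1.ne'
      · exact (hhyb p).2.1 (by rw [hrept]) x h1.le h2.le h1.ne'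
    have hq : RU.EE g x (lastAlt m) q := by
      refine hE q x (lastAlt m) q (rep _) (rep q) (hrept _) (hrept _) ?_ ?_
      · exact (hhyb _).2.2 (by rw [hrept]; exact hlast _) x h1.le h2.le h2.ne
      · exact (hhyb q).2.2 (by rw [hrept]) x h1.le h2.le h2.ne
    rcases RU.path_split hstar y x hy with ⟨l, hl, hx, hyl, h0⟩ | ⟨l, hl, hx, hyl, h0⟩
    · exact Or.inl ((hchE l x hl hx y hyl _ h0).trans hp)
    · exact Or.inr ((hchE l x hl hx y hyl _ h0).trans hq)
  have hout : ∀ y, y < p ∨ q < y → ∀ s t, p ≤ s → s ≤ q → p ≤ t → t ≤ q → RU.EE g y s t := by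
    intro y hy s t hs1 hs2 ht1 ht2
    rcases hy with hy | hy
    · have aux : ∀ s, p ≤ s → Prefers (rep s).1 p y := by
        intro s hs
        rcases eq_or_lt_of_le hs with e | hs
        · subst e
          have := RU.pref_top (rep p).1 (b := y) (by rw [hrept]; exact hy.ne)
          rwa [hrept] at this
        · exact (hhyb s).1 y p (Or.inl ⟨hy.le, le_rfl⟩) (Or.inl ⟨hy, by rw [hrept]; exact hs⟩)
      exact hE p y s t (rep s) (rep t) (hrept _) (hrept _) (aux s hs1) (aux t ht1)
    · have aux : ∀ s, s ≤ q → Prefers (rep s).1 q y := by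
        intro s hs
        rcases eq_or_lt_of_le hs with e | hs
        · subst e
          have := RU.pref_top (rep s).1 (b := y) (by rw [hrept]; exact hy.ne')
          rwa [hrept] at this
        · exact (hhyb s).1 y q (Or.inr ⟨hy.le, le_rfl⟩) (Or.inr ⟨by rw [hrept]; exact hs, hy⟩)
      exact hE q y s t (rep s) (rep t) (hrept _) (hrept _) (aux s hs2) (aux t ht2)
  obtain ⟨u, v, hu1, hv1, huv, hpu, hpv⟩ := RU.nbr_p hm hgap hstar
  obtain ⟨u', v', hu1', hv1', huv', hqu, hqv⟩ := RU.nbr_q hm hgap hstar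
  intro i P Pi Pi' _ hs1 hs2 ht1 ht2 x hxs hxt
  set s := topOf Pi with hs
  set t := topOf Pi' with ht
  set T : Fin n → Fin m := fun j => topOf (P j) with hT
  have hupd : ∀ R : D, (fun j => topOf (Function.update P i R j))
      = Function.update T i (topOf R) := by
    intro R
    funext j
    by_cases e : j = i
    · subst e; simp
    · simp [e, hT]
  rw [hg, hg, hupd, hupd, ← hs, ← ht]
  by_cases o : x < p ∨ q < x
  · exact hout x o s t hs1 hs2 ht1 ht2 T i
  push Not at o
  by_cases e1 : x = p
  · subst e1
    exact Ep s t (lt_of_le_of_ne hs1 hxs) (lt_of_le_of_ne ht1 hxt) T i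
  by_cases e2 : x = q
  · subst e2
    exact Eq s t (lt_of_le_of_ne hs2 hxs.symm) (lt_of_le_of_ne ht2 hxt.symm) T i
  have hx1 : p < x := lt_of_le_of_ne o.1 (fun e => e1 e.symm)
  have hx2 : x < q := lt_of_le_of_ne o.2 e2
  have hcore := RU.core hnn hsum hun hpq hu1 hv1 huv (hSC _ _ hpu) (hSC _ _ hpv) hu1' hv1' huv'
    (hSC _ _ hqu) (hSC _ _ hqv) Ep Eq hmid hout x hx1 hx2
  rw [hcore, hcore (Function.update T i t)]
  have : Finset.univ.filter (fun j => Function.update T i s j = x)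
      = Finset.univ.filter (fun j => Function.update T i t j = x) := by
    ext j
    simp only [Finset.mem_filter, Finset.mem_univ, true_and]
    by_cases e : j = i
    · subst e; simp [hxs.symm, hxt.symm]
    · simp [e]
  rw [this]
end
end

section
/- Let 1 ≤ p < q ≤ m with q − p > 1, let D be a regular domain that is a (p, q)-hybrid* domain, and let φ : D^n → Δ(A) be a unanimous, strategy-proof RSCF satisfying the tops-only property. Since D is minimally rich, φ induces a well-defined random voting scheme φ̃ : A^n → Δ(A) by φ̃(x_1, …, x_n) = φ(P) for any P ∈ D^n with r_1(P_i) = x_i for all i. Then φ̃ is strategy-proof on the (p, q)-hybrid domain: for every i ∈ N, all P̂_i, P̂_i′ ∈ D_≺(p, q) and all P̂_{-i} ∈ [D_≺(p, q)]^{n−1}, the lottery φ̃(r_1(P̂_i), r_1(P̂_{-i})) first-order stochastically dominates φ̃(r_1(P̂_i′), r_1(P̂_{-i})) w.r.t. P̂_i, i.e., Σ_{t=1}^{k} φ̃_{r_t(P̂_i)}(r_1(P̂_i), r_1(P̂_{-i})) ≥ Σ_{t=1}^{k} φ̃_{r_t(P̂_i)}(r_1(P̂_i′), r_1(P̂_{-i}))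 for all k = 1, …, m. -/
open Finset

noncomputable section

open PFBRPaper

section Abs

set_option linter.unusedSectionVars false

variable {V N : Type} [Fintype V] [DecidableEq V] [Fintype N] [DecidableEq N]

def indR (c y : V) : ℝ := if c = y then 1 else 0

structure Sch (E : V → V → Prop) (ψ : (N → V) → V → ℝ) : Prop where
  nonneg : ∀ X c, 0 ≤ ψ X c
  sum1 : ∀ X, ∑ c, ψ X c = 1
  unan : ∀ a c, ψ (fun _ => a) c = indR c a
  symm : ∀ x y, E x y → E y x
  irr : ∀ x, ¬ E x x
  shift : ∀ x y, E x y → ∀ i X, ∃ δ : ℝ, 0 ≤ δ ∧ ∀ c,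
    ψ (Function.update X i y) c = ψ (Function.update X i x) c + δ * (indR c y - indR c x)

def dd (ψ : (N → V) → V → ℝ) (i : N) (x y : V) (X : N → V) : ℝ :=
  ψ (Function.update X i y) y - ψ (Function.update X i x) y

def cf (x y : V) (S : Finset N) : N → V := fun j => if j ∈ S then y else x

def ff (ψ : (N → V) → V → ℝ) (x y : V) (S : Finset N) : ℝ := ψ (cf x y S) y

def Eo (E : V → V → Prop) (x y : V) : V → V → Prop :=
  fun z w => E z w ∧ ¬ (z = x ∧ w = y) ∧ ¬ (z = y ∧ w = x)

variable {E : V → V → Prop} {ψ : (N → V) → V → ℝ}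


theorem Sch.ne (h : Sch E ψ) {x y : V} (e : E x y) : x ≠ y := by
  rintro rfl; exact h.irr _ e

theorem Sch.dnn (h : Sch E ψ) {x y : V} (e : E x y) (i : N) (X : N → V) :
    0 ≤ dd ψ i x y X := by
  obtain ⟨δ, h0, hδ⟩ := h.shift x y e i X
  have := hδ y
  have hne := h.ne e
  simp only [indR, if_true, if_neg hne.symm] at this
  unfold dd; linarith

theorem Sch.l1 (h : Sch E ψ) {x y : V} (e : E x y) (i : N) (X : N → V) (c : V) :
    ψ (Function.update X i y) c = ψ (Function.update X i x) c
      + dd ψ i x y X * (indR c y - indR c x) := by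
  obtain ⟨δ, h0, hδ⟩ := h.shift x y e i X
  have := hδ y
  have hne := h.ne e
  simp only [indR, if_true, if_neg hne.symm] at this
  have hd : dd ψ i x y X = δ := by unfold dd; linarith
  rw [hd]; exact hδ c

theorem Sch.l2 (h : Sch E ψ) {x y z w : V} (e : E x y) (e' : Eo E x y z w) (i j : N) (hij : j ≠ i)
    (X : N → V) :
    dd ψ i x y (Function.update X j z) = dd ψ i x y (Function.update X j w) := by
  obtain ⟨ezw, n1, n2⟩ := e'
  have hxy := h.ne e
  have key : ∀ c, c ≠ z → c ≠ w → (dd ψ i x y (Function.update X j w) -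
      dd ψ i x y (Function.update X j z)) * (indR c y - indR c x) = 0 := by
    intro c hz hw
    have a1 := h.l1 e i (Function.update X j w) c
    have a2 := h.l1 e i (Function.update X j z) c
    have a3 := h.l1 ezw j (Function.update X i x) c
    have a4 := h.l1 ezw j (Function.update X i y) c
    rw [Function.update_comm hij, Function.update_comm hij] at a1 a2
    have i1 : indR c z = 0 := if_neg hz
    have i2 : indR c w = 0 := if_neg hw
    rw [i1, i2] at a3 a4
    linarith
  by_cases hx : x ≠ z ∧ x ≠ w
  · have := key x hx.1 hx.2
    simp only [indR, if_true, if_neg hxy] at this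
    linarith
  · have hy : y ≠ z ∧ y ≠ w := by
      constructor
      · rintro rfl; apply hx
        refine ⟨hxy, ?_⟩
        rintro rfl; exact n2 ⟨rfl, rfl⟩
      · rintro rfl; apply hx
        refine ⟨?_, hxy⟩
        rintro rfl; exact n1 ⟨rfl, rfl⟩
    have := key y hy.1 hy.2
    simp only [indR, if_true, if_neg hxy.symm] at this
    linarith

theorem Sch.l3 (h : Sch E ψ) {x y z w : V} (e : E x y)
    (r : Relation.ReflTransGen (Eo E x y) z w) (i j : N) (X : N → V) :
    dd ψ i x y (Function.update X j z) = dd ψ i x y (Function.update X j w) := by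
  by_cases hij : j = i
  · subst hij; simp [dd]
  · induction r with
    | refl => rfl
    | tail _ s ih => rw [ih]; exact h.l2 e s i j hij X

theorem Sch.l4 (h : Sch E ψ) {x y : V} (e : E x y) (i : N) (X X' : N → V)
    (r : ∀ j, Relation.ReflTransGen (Eo E x y) (X j) (X' j)) :
    dd ψ i x y X = dd ψ i x y X' := by
  have key : ∀ T : Finset N, dd ψ i x y X = dd ψ i x y (fun j => if j ∈ T then X' j else X j) := by
    intro T
    induction T using Finset.induction_on with
    | empty => simp
    | insert a T ha ih =>
      rw [ih]
      have := h.l3 e (r a) i a (fun j => if j ∈ T then X' j else X j)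
      convert this using 2
      · ext j; by_cases hj : j = a
        · subst hj; simp [ha]
        · simp [hj]
      · ext j; by_cases hj : j = a
        · subst hj; simp
        · simp [hj]
  simpa using key Finset.univ

theorem cf_empty (x y : V) : cf x y (∅ : Finset N) = fun _ => x := by
  ext j; simp [cf]

theorem cf_univ (x y : V) : cf x y (Finset.univ : Finset N) = fun _ => y := by
  ext j; simp [cf]

theorem cf_insert (x y : V) (S : Finset N) (i : N) :
    cf x y (insert i S) = Function.update (cf x y S) i y := by
  ext j; by_cases hj : j = i
  · subst hj; simp [cf]
  · simp [cf, hj]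

theorem cf_notin (x y : V) (S : Finset N) (i : N) (hi : i ∉ S) :
    Function.update (cf x y S) i x = cf x y S := by
  ext j; by_cases hj : j = i
  · subst hj; simp [cf, hi]
  · simp [hj]

theorem Sch.l5 (_h : Sch E ψ) (x y : V) (S : Finset N) (i : N) (hi : i ∉ S) :
    ff ψ x y (insert i S) = ff ψ x y S + dd ψ i x y (cf x y S) := by
  unfold ff dd
  rw [cf_insert, cf_notin x y S i hi]; ring

theorem Sch.f0 (h : Sch E ψ) {x y : V} (e : E x y) : ff ψ x y ∅ = 0 := by
  have := h.unan x y
  simp only [indR, if_neg (h.ne e).symm] at this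
  rw [ff, cf_empty]; exact this

theorem Sch.f1 (h : Sch E ψ) (x y : V) : ff ψ x y univ = 1 := by
  have := h.unan y y
  rw [ff, cf_univ, this]; simp [indR]

theorem Sch.l6 (h : Sch E ψ) {x y : V} (e : E x y) (S : Finset N) :
    ψ (cf x y S) x + ψ (cf x y S) y = 1 := by
  have hne := h.ne e
  induction S using Finset.induction_on with
  | empty =>
    have a := h.unan x x
    have b := h.unan x y
    simp only [indR, if_true, if_neg hne.symm] at a b
    rw [cf_empty, a, b]; norm_num
  | insert i S hi ih =>
    have a := h.l1 e i (cf x y S) x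
    have b := h.l1 e i (cf x y S) y
    rw [cf_notin x y S i hi, ← cf_insert] at a b
    simp only [indR, if_true, if_neg hne, if_neg hne.symm] at a b
    linarith

theorem cf_compl (x y : V) (S : Finset N) : cf y x Sᶜ = cf x y S := by
  ext j; by_cases hj : j ∈ S <;> simp [cf, hj]

theorem Sch.fcompl (h : Sch E ψ) {x y : V} (e : E x y) (S : Finset N) :
    ff ψ y x Sᶜ = 1 - ff ψ x y S := by
  have := h.l6 e S
  unfold ff; rw [cf_compl]; linarith

theorem Sch.l7a (h : Sch E ψ) {x y z : V} (e1 : E y x) (e2 : E y z) (hxz : x ≠ z) (S : Finset N) :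
    ψ (fun j => if j ∈ S then x else z) x = ff ψ y x S := by
  have key : ∀ T : Finset N, ψ (fun j => if j ∈ S then x else if j ∈ T then z else y) x
      = ff ψ y x S := by
    intro T
    induction T using Finset.induction_on with
    | empty => simp [ff]; rfl
    | insert i T hi ih =>
      by_cases hS : i ∈ S
      · rw [← ih]; congr 1; ext j
        by_cases hj : j = i
        · subst hj; simp [hS]
        · simp [hj]
      · rw [← ih]
        have := h.l1 e2 i (fun j => if j ∈ S then x else if j ∈ T then z else y) x
        have i1 : indR x z = 0 := if_neg hxz
        have i2 : indR x y = 0 := if_neg (h.ne e1).symm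
        rw [i1, i2, sub_zero, mul_zero, add_zero] at this
        convert this using 2
        · ext j; by_cases hj : j = i
          · subst hj; simp [hS]
          · simp [hj]
        · ext j; by_cases hj : j = i
          · subst hj; simp [hS, hi]
          · simp [hj]
  simpa using key Finset.univ

theorem Sch.pair_le (h : Sch E ψ) {x z : V} (hxz : x ≠ z) (X : N → V) : ψ X x + ψ X z ≤ 1 := by
  rw [← h.sum1 X, ← Finset.sum_pair hxz]
  exact Finset.sum_le_sum_of_subset_of_nonneg (Finset.subset_univ _) (fun c _ _ => h.nonneg X c)

theorem Sch.l7 (h : Sch E ψ) {x y z : V} (e1 : E y x) (e2 : E y z) (hxz : x ≠ z) (S : Finset N) :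
    ff ψ y x S + ff ψ y z Sᶜ ≤ 1 := by
  have a := h.l7a e1 e2 hxz S
  have b := h.l7a e2 e1 hxz.symm Sᶜ
  have c := h.pair_le hxz (fun j => if j ∈ S then x else z)
  have : (fun j => if j ∈ Sᶜ then z else x) = (fun j => if j ∈ S then x else z) := by
    ext j; by_cases hj : j ∈ S <;> simp [hj]
  rw [this] at b
  linarith

theorem Sch.l8 (h : Sch E ψ) {x y z : V} (e1 : E x y) (e2 : E y z) (hxz : z ≠ x) (S : Finset N) :
    ff ψ y z S ≤ ff ψ x y S := by
  have a := h.l7 (h.symm _ _ e1) e2 hxz.symm Sᶜ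
  rw [compl_compl, h.fcompl e1] at a
  linarith

def Addv (g : Finset N → ℝ) : Prop := ∃ ε : N → ℝ, ∑ i, ε i = 1 ∧ ∀ S, g S = ∑ i ∈ S, ε i

theorem Addv.compl {g : Finset N → ℝ} (h : Addv g) (S : Finset N) : g Sᶜ = 1 - g S := by
  obtain ⟨ε, h1, h2⟩ := h
  rw [h2, h2, ← h1, ← Finset.sum_add_sum_compl S ε]; ring

theorem Addv.eq {g k : Finset N → ℝ} (h : Addv g) (h' : Addv k) (hl : ∀ S, g S ≤ k S) (S) :
    g S = k S := by
  have a := h.compl S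
  have b := h'.compl S
  have c := hl S
  have d := hl Sᶜ
  linarith

theorem Sch.l9 (h : Sch E ψ) {x y : V} (e : E x y) (r : Relation.ReflTransGen (Eo E x y) y x) :
    Addv (ff ψ x y) := by
  have key : ∀ S, ff ψ x y S = ∑ i ∈ S, dd ψ i x y (fun _ => x) := by
    intro S
    induction S using Finset.induction_on with
    | empty => simp [h.f0 e]
    | insert i S hi ih =>
      rw [h.l5 x y S i hi, ih, Finset.sum_insert hi, add_comm]
      congr 1
      apply h.l4 e
      intro j
      by_cases hj : j ∈ S
      · simpa [cf, hj] using r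
      · simp only [cf, hj, if_false]; exact Relation.ReflTransGen.refl
  exact ⟨_, by rw [← key, h.f1], key⟩

theorem Sch.l10 (h : Sch E ψ) (F : V → V → Prop) (hF : ∀ x y, F x y → E x y)
    (hs : ∀ x y, F x y → ∃ z, F y z ∧ z ≠ x) {x y : V} (e : F x y) :
    ∃ k : Finset N → ℝ, Addv k ∧ ∀ S, k S ≤ ff ψ x y S := by
  choose! g hg hg' using hs
  let st : {e : V × V // F e.1 e.2} → {e : V × V // F e.1 e.2} :=
    fun e => ⟨(e.1.2, g e.1.1 e.1.2), hg _ _ e.2⟩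
  let w : ℕ → {e : V × V // F e.1 e.2} := fun k => st^[k] ⟨(x, y), e⟩
  have hw : ∀ k, w (k+1) = st (w k) := fun k => Function.iterate_succ_apply' st k _
  let v : ℕ → V := fun k => (w k).1.1
  have hv1 : ∀ k, v (k+1) = (w k).1.2 := by intro k; simp only [v, hw]; rfl
  have hFv : ∀ k, F (v k) (v (k+1)) := by intro k; rw [hv1]; exact (w k).2
  have hv2 : ∀ k, v (k+2) ≠ v k := by
    intro k; rw [hv1, hw]
    exact hg' _ _ (w k).2
  have hmono : ∀ k S, ff ψ (v k) (v (k+1)) S ≤ ff ψ x y S := by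
    intro k S
    induction k with
    | zero => rw [hv1]; exact le_rfl
    | succ k ih =>
      exact le_trans (h.l8 (hF _ _ (hFv k)) (hF _ _ (hFv (k+1))) (hv2 k) S) ih
  have hex : ∃ b, ∃ a, a < b ∧ v a = v b := by
    obtain ⟨a, b, hab, he⟩ := Finite.exists_ne_map_eq_of_infinite v
    rcases lt_or_gt_of_ne hab with hl | hl
    · exact ⟨b, a, hl, he⟩
    · exact ⟨a, b, hl, he.symm⟩
  classical
  obtain ⟨a, hab, hva⟩ := Nat.find_spec hex
  have hmin := fun b => @Nat.find_min _ _ hex b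
  generalize Nat.find hex = b at *
  obtain ⟨c, rfl⟩ : ∃ c, b = c + 1 := ⟨b - 1, by omega⟩
  have hinj : ∀ i j, i < j → j ≤ c → v i ≠ v j := by
    intro i j hij hj hc
    exact hmin j (by omega) ⟨i, hij, hc⟩
  have hac : a ≠ c := by
    rintro rfl; exact h.irr _ (by simpa [← hva] using hF _ _ (hFv a))
  refine ⟨_, h.l9 (hF _ _ (hFv c)) ?_, hmono c⟩
  rw [← hva]
  have key : ∀ t, a + t ≤ c → Relation.ReflTransGen (Eo E (v c) (v a)) (v a) (v (a + t)) := by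
    intro t
    induction t with
    | zero => intro _; exact Relation.ReflTransGen.refl
    | succ t ih =>
      intro ht
      refine (ih (by omega)).tail ⟨hF _ _ (hFv _), ?_, ?_⟩
      · rintro ⟨h1, _⟩; exact hinj (a+t) c (by omega) le_rfl h1
      · rintro ⟨h1, h2⟩
        have t0 : t = 0 := by
          by_contra ht0
          exact hinj a (a+t) (by omega) (by omega) h1.symm
        subst t0
        have : a + 1 = c := by
          by_contra hne
          exact hinj (a+1) c (by omega) le_rfl h2
        subst this
        exact hv2 a hva.symm
  have := key (c - a) (by omega)
  rwa [show a + (c - a) = c by omega] at this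

theorem Sch.l11 (h : Sch E ψ) (F : V → V → Prop) (hF : ∀ x y, F x y → E x y)
    (hsym : ∀ x y, F x y → F y x)
    (hs : ∀ x y, F x y → ∃ z, F y z ∧ z ≠ x) {x y : V} (e : F x y) : Addv (ff ψ x y) := by
  obtain ⟨k, hk, hk'⟩ := h.l10 F hF hs e
  obtain ⟨l, hl, hl'⟩ := h.l10 F hF hs (hsym _ _ e)
  have hu : ∀ S, ff ψ x y S ≤ l S := by
    intro S
    have a := hl' Sᶜ
    rw [h.fcompl (hF _ _ e), hl.compl] at a
    linarith
  have : ff ψ x y = k := by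
    ext S
    have a := hk.eq hl (fun S => (hk' S).trans (hu S)) S
    have b := hk' S
    have c := hu S
    linarith
  rw [this]; exact hk

theorem Sch.l12 (h : Sch E ψ) (F : V → V → Prop) (hF : ∀ x y, F x y → E x y)
    (hsym : ∀ x y, F x y → F y x)
    (hs : ∀ x y, F x y → ∃ z, F y z ∧ z ≠ x) {x y z : V} (e : F x y) (e' : F y z) (S : Finset N) :
    ff ψ x y S = ff ψ y z S := by
  have A := h.l11 F hF hsym hs e
  have B := h.l11 F hF hsym hs e'
  by_cases hz : z = x
  · subst hz
    have a := h.fcompl (hF _ _ e) S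
    have b := B.compl S
    linarith
  · exact (B.eq A (fun S => h.l8 (hF _ _ e) (hF _ _ e') hz S) S).symm

theorem Sch.l13 (h : Sch E ψ) (F : V → V → Prop) (hF : ∀ x y, F x y → E x y)
    (hsym : ∀ x y, F x y → F y x)
    (hs : ∀ x y, F x y → ∃ z, F y z ∧ z ≠ x)
    {x0 y0 : V} (e0 : F x0 y0) {v : V} (r : Relation.ReflTransGen F y0 v) :
    ∀ u, F u v → ∀ S : Finset N, ff ψ u v S = ff ψ x0 y0 S := by
  induction r with
  | refl =>
    intro u hu S
    rw [h.l12 F hF hsym hs hu (hsym _ _ hu), h.l12 F hF hsym hs e0 (hsym _ _ hu)]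
  | tail _ s ih =>
    intro u hu S
    rw [h.l12 F hF hsym hs hu (hsym _ _ hu), ← h.l12 F hF hsym hs s (hsym _ _ hu),
      h.l12 F hF hsym hs s (hsym _ _ s)]
    exact ih _ (hsym _ _ s) S

theorem reach_or {x y z : V} (r : Relation.ReflTransGen E z x) :
    Relation.ReflTransGen (Eo E x y) z x ∨ Relation.ReflTransGen (Eo E x y) z y := by
  induction r using Relation.ReflTransGen.head_induction_on with
  | refl => exact Or.inl .refl
  | head s _ ih =>
    rename_i a b _
    by_cases hx : a = x
    · subst hx; exact Or.inl .refl
    by_cases hy : a = y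
    · subst hy; exact Or.inr .refl
    have : Eo E x y a b := ⟨s, fun hh => hx hh.1, fun hh => hy hh.1⟩
    exact ih.imp (fun q => q.head this) (fun q => q.head this)

theorem Sch.l14 (h : Sch E ψ) (F : V → V → Prop) (hF : ∀ x y, F x y → E x y)
    (hsym : ∀ x y, F x y → F y x)
    (hs : ∀ x y, F x y → ∃ z, F y z ∧ z ≠ x)
    (hcon : ∀ x y, Relation.ReflTransGen E x y)
    {x0 y0 : V} (e0 : F x0 y0) (hFc : ∀ u v, F u v → Relation.ReflTransGen F y0 v) :
    ∃ ε : N → ℝ, ∀ x y, F x y → ∀ i X, dd ψ i x y X = ε i := by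
  obtain ⟨ε, h1, h2⟩ := h.l11 F hF hsym hs e0
  refine ⟨ε, ?_⟩
  intro x y e i X
  have hf : ∀ S, ff ψ x y S = ∑ i ∈ S, ε i := fun S => by
    rw [h.l13 F hF hsym hs e0 (hFc _ _ e) x e S, h2]
  classical
  let S : Finset N := univ.filter (fun j => j ≠ i ∧ ¬ Relation.ReflTransGen (Eo E x y) (X j) x)
  have hi : i ∉ S := by simp [S]
  have a := h.l5 x y S i hi
  rw [hf, hf, Finset.sum_insert hi] at a
  have b : dd ψ i x y X = dd ψ i x y (Function.update X i x) := by simp [dd]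
  have c : dd ψ i x y (Function.update X i x) = dd ψ i x y (cf x y S) := by
    apply h.l4 (hF _ _ e)
    intro j
    by_cases hj : j = i
    · subst hj; simp [cf, hi]; exact .refl
    · by_cases hr : Relation.ReflTransGen (Eo E x y) (X j) x
      · simpa [cf, S, hj, hr] using hr
      · have := (reach_or (y := y) (hcon (X j) x)).resolve_left hr
        simpa [cf, S, hj, hr] using this
  rw [b, c]; linarith

theorem Sch.l15 (h : Sch E ψ) (F : V → V → Prop) (hF : ∀ x y, F x y → E x y)
    (hsym : ∀ x y, F x y → F y x)
    (hs : ∀ x y, F x y → ∃ z, F y z ∧ z ≠ x)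
    (hcon : ∀ x y, Relation.ReflTransGen E x y)
    {x0 y0 : V} (e0 : F x0 y0) (hFc : ∀ u v, F u v → Relation.ReflTransGen F y0 v)
    (i : N) (X : N → V) :
    ∃ δ : ℝ, 0 ≤ δ ∧ ∀ x y, Relation.ReflTransGen F x y → ∀ c,
    ψ (Function.update X i y) c = ψ (Function.update X i x) c + δ * (indR c y - indR c x) := by
  obtain ⟨ε, hε⟩ := h.l14 F hF hsym hs hcon e0 hFc
  refine ⟨ε i, ?_, ?_⟩
  · rw [← hε _ _ e0 i X]; exact h.dnn (hF _ _ e0) i X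
  · intro x y r c
    induction r with
    | refl => ring
    | tail _ s ih =>
      rw [h.l1 (hF _ _ s), hε _ _ s, ih]; ring

end Abs

section Conc

set_option linter.unusedSectionVars false

variable {m n : ℕ}

theorem topSum_succ (lam : Lottery m) (P : Pref m) (k : ℕ) (hk : k < m) :
    topSum lam P (k+1) = topSum lam P k + lam.1 (P ⟨k, hk⟩) := by
  unfold topSum
  have : (Finset.univ.filter (fun t : Fin m => (t : ℕ) < k + 1))
      = insert ⟨k, hk⟩ (Finset.univ.filter (fun t : Fin m => (t : ℕ) < k)) := by
    ext t; simp [Fin.ext_iff]; omega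
  rw [this, Finset.sum_insert (by simp), add_comm]

theorem topSum_zero (lam : Lottery m) (P : Pref m) : topSum lam P 0 = 0 := by
  simp [topSum]

theorem sum_ind (Q : Pref m) (k : ℕ) (b : Fin m) :
    ∑ t ∈ Finset.univ.filter (fun t : Fin m => (t : ℕ) < k), indR (Q t) b
      = if (Q.symm b : ℕ) < k then 1 else 0 := by
  have : ∀ t, indR (Q t) b = if Q.symm b = t then 1 else 0 := by
    intro t; unfold indR
    by_cases h : Q t = b
    · subst h; simp
    · have : Q.symm b ≠ t := by rintro rfl; simp at h
      simp [h, this]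
  simp [this]

theorem topSum_shift (l1 l2 : Lottery m) (Q : Pref m) (k : ℕ) (a b : Fin m) (δ : ℝ) (hδ : 0 ≤ δ)
    (h : ∀ c, l2.1 c = l1.1 c + δ * (indR c b - indR c a)) (hp : a = b ∨ Prefers Q a b) :
    topSum l2 Q k ≤ topSum l1 Q k := by
  have : topSum l2 Q k = topSum l1 Q k + δ *
      ((if (Q.symm b : ℕ) < k then 1 else 0) - (if (Q.symm a : ℕ) < k then 1 else 0)) := by
    rw [← sum_ind, ← sum_ind, ← Finset.sum_sub_distrib, Finset.mul_sum, topSum, topSum,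
      ← Finset.sum_add_distrib]
    exact Finset.sum_congr rfl (fun t _ => h _)
  rw [this]
  rcases hp with rfl | hp
  · simp
  · have hp' : (Q.symm a : ℕ) < (Q.symm b : ℕ) := hp
    have : ((if (Q.symm b : ℕ) < k then (1:ℝ) else 0) - (if (Q.symm a : ℕ) < k then 1 else 0)) ≤ 0 := by
      split_ifs <;> first | omega | norm_num
    nlinarith

variable [NeZero m]

theorem prefers_top (Q : Pref m) (b : Fin m) : Q 0 = b ∨ Prefers Q (Q 0) b := by
  by_cases h : Q 0 = b
  · exact Or.inl h
  · right
    unfold Prefers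
    rw [Equiv.symm_apply_apply]
    refine lt_of_le_of_ne (Fin.zero_le _) ?_
    intro h'; apply h; rw [h']; simp

theorem SC_symm {D : Set (Pref m)} {a b : Fin m} (h : StronglyConnected D a b) :
    StronglyConnected D b a := by
  obtain ⟨hn, P, hP, P', hP', h1, h2, h3, h4, h5⟩ := h
  exact ⟨hn.symm, P', hP', P, hP, h3, h4, h1, h2, fun k hk => (h5 k hk).symm⟩

theorem SC_second (hm : 3 ≤ m) {P : Pref m} {b s : Fin m} (h1 : P 1 = b) (h : Prefers P s b) :
    s = P 0 := by
  have h2 : P.symm b = 1 := by rw [← h1]; simp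
  unfold Prefers at h
  rw [h2] at h
  have h3 : ((1 : Fin m) : ℕ) = 1 := by
    rw [Fin.val_one']; exact Nat.mod_eq_of_lt (by omega)
  have h4 : P.symm s = 0 := by
    have : (P.symm s : ℕ) < ((1 : Fin m) : ℕ) := h
    rw [← Fin.val_eq_zero_iff]; omega
  rw [← h4]; simp

theorem edge_left (hm : 3 ≤ m) {D : Set (Pref m)} {p q : Fin m} (hpq : p < q)
    (hD : D ⊆ hybridDomain p q) {a b : Fin m} (h : StronglyConnected D a b) (ha : a < p) :
    (b : ℕ) = a + 1 ∨ (a : ℕ) = b + 1 := by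
  obtain ⟨hn, P, hP, P', hP', h1, h2, -⟩ := h
  obtain ⟨i1, i2, i3⟩ := hD hP
  have no : ∀ s, Prefers P s b → s = a := fun s hs => by rw [← h1]; exact SC_second hm h2 hs
  rw [h1] at i1 i2 i3
  have hnv : (a : ℕ) ≠ b := fun h => hn (Fin.ext h)
  simp only [Fin.lt_def, Fin.le_def, Fin.ext_iff, ne_eq] at *
  have := p.2; have := q.2; have := a.2; have := b.2
  by_contra hc
  rcases lt_or_ge (a : ℕ) b with hab | hab
  · by_cases hbp : (b : ℕ) ≤ p
    · have := no _ (i1 b ⟨a + 1, by omega⟩ (by simp; omega) (by simp; omega))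
      simp at this
    · by_cases hbq : (b : ℕ) ≤ q
      · have := no _ (i2 (by omega) b (by omega) (by omega) (by omega))
        omega
      · have := no _ (i1 b q (by omega) (by omega))
        omega
  · have := no _ (i1 b ⟨b + 1, by omega⟩ (by simp; omega) (by simp; omega))
    simp at this; omega

theorem edge_right (hm : 3 ≤ m) {D : Set (Pref m)} {p q : Fin m} (hpq : p < q)
    (hD : D ⊆ hybridDomain p q) {a b : Fin m} (h : StronglyConnected D a b) (ha : q < a) :
    (b : ℕ) = a + 1 ∨ (a : ℕ) = b + 1 := by
  obtain ⟨hn, P, hP, P', hP', h1, h2, -⟩ := h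
  obtain ⟨i1, i2, i3⟩ := hD hP
  have no : ∀ s, Prefers P s b → s = a := fun s hs => by rw [← h1]; exact SC_second hm h2 hs
  rw [h1] at i1 i2 i3
  have hnv : (a : ℕ) ≠ b := fun h => hn (Fin.ext h)
  simp only [Fin.lt_def, Fin.le_def, Fin.ext_iff, ne_eq] at *
  have := p.2; have := q.2; have := a.2; have := b.2
  by_contra hc
  rcases lt_or_ge (b : ℕ) a with hab | hab
  · by_cases hbp : (q : ℕ) ≤ b
    · obtain ⟨c, hcv⟩ : ∃ c : Fin m, (c : ℕ) = a - 1 := ⟨⟨a - 1, by omega⟩, rfl⟩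
      have := no c (i1 b c (by omega) (by omega))
      omega
    · by_cases hbq : (p : ℕ) ≤ b
      · have := no _ (i3 (by omega) b (by omega) (by omega) (by omega))
        omega
      · have := no _ (i1 b p (by omega) (by omega))
        omega
  · obtain ⟨c, hcv⟩ : ∃ c : Fin m, (c : ℕ) = b - 1 := ⟨⟨b - 1, by omega⟩, rfl⟩
    have := no c (i1 b c (by omega) (by omega))
    omega

theorem edge_cases (hm : 3 ≤ m) {D : Set (Pref m)} {p q : Fin m} (hpq : p < q)
    (hD : D ⊆ hybridDomain p q) {a b : Fin m} (h : StronglyConnected D a b) :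
    (p ≤ a ∧ a ≤ q ∧ p ≤ b ∧ b ≤ q) ∨
    (((b : ℕ) = a + 1 ∨ (a : ℕ) = b + 1) ∧ ((a ≤ p ∧ b ≤ p) ∨ (q ≤ a ∧ q ≤ b))) := by
  have l1 := edge_left hm hpq hD h
  have l2 := edge_right hm hpq hD h
  have l3 := edge_left hm hpq hD (SC_symm h)
  have l4 := edge_right hm hpq hD (SC_symm h)
  simp only [Fin.lt_def, Fin.le_def] at *
  omega

theorem chain_reach {α : Type} {R : α → α → Prop} : ∀ (l : List α) (a : α), List.IsChain R (a :: l) →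
    ∀ k ∈ a :: l, Relation.ReflTransGen R a k := by
  intro l
  induction l with
  | nil => intro a _ k hk; simp at hk; subst hk; exact .refl
  | cons b l ih =>
    intro a hc k hk
    rw [List.isChain_cons_cons] at hc
    rcases List.mem_cons.1 hk with rfl | hk
    · exact .refl
    · exact (ih b hc.2 k hk).head hc.1

theorem reach0 (hm : 3 ≤ m) {D : Set (Pref m)} {p q : Fin m} (hs : IsHybridStar D p q) (k : Fin m) :
    Relation.ReflTransGen (StronglyConnected D) 0 k := by
  have aux : ∀ l, VertexPathBetween D Set.univ 0 (lastAlt m) l → ∀ k ∈ l,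
      Relation.ReflTransGen (StronglyConnected D) 0 k := by
    rintro l ⟨⟨-, -, -, hc⟩, hh, -⟩ k hk
    cases l with
    | nil => simp at hh
    | cons a l =>
      simp at hh; subst hh
      exact chain_reach l _ hc k hk
  by_cases h0 : k = 0
  · subst h0; exact .refl
  by_cases hl : k = lastAlt m
  · obtain ⟨l, hl', -⟩ := hs.2.1 ⟨1, by omega⟩ (by simp [Fin.ext_iff])
      (by simp [Fin.ext_iff, lastAlt]; omega)
    subst hl
    exact aux l hl' _ (List.mem_of_getLast? hl'.2.2)
  · obtain ⟨l, hl', hk⟩ := hs.2.1 k h0 hl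
    exact aux l hl' _ hk

theorem crossing {R : Fin m → Fin m → Prop} {x y : Fin m} (s : Fin m)
    (r : Relation.ReflTransGen R x y) (hx : x ≤ s) : y ≤ s ∨ ∃ a b, R a b ∧ a ≤ s ∧ s < b := by
  induction r with
  | refl => exact Or.inl hx
  | tail _ e ih =>
    rename_i b c _
    rcases ih with ih | ih
    · by_cases hc : c ≤ s
      · exact Or.inl hc
      · exact Or.inr ⟨b, c, e, ih, not_le.1 hc⟩
    · exact Or.inr ih

theorem line_edge (hm : 3 ≤ m) {D : Set (Pref m)} {p q : Fin m} (hpq : p < q)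
    (hs : IsHybridStar D p q) {s s' : Fin m} (h : (s' : ℕ) = s + 1) (hc : s' ≤ p ∨ q ≤ s) :
    StronglyConnected D s s' := by
  rcases crossing s (reach0 hm hs s') (Fin.zero_le _) with h' | ⟨a, b, e, ha, hb⟩
  · simp only [Fin.le_def] at h'; omega
  · have c := edge_cases hm hpq hs.1 e
    have h1 : a = s ∧ b = s' := by
      simp only [Fin.lt_def, Fin.le_def, Fin.ext_iff] at *
      omega
    rw [← h1.1, ← h1.2]; exact e

def clampM (p q x : Fin m) : Fin m := if x ≤ p then p else if q ≤ x then q else x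

theorem clamp_mem {p q : Fin m} (hpq : p < q) (x : Fin m) :
    p ≤ clampM p q x ∧ clampM p q x ≤ q := by
  unfold clampM
  split_ifs <;> simp only [Fin.lt_def, Fin.le_def] at * <;> omega

theorem clamp_id {p q : Fin m} {x : Fin m} (h1 : p ≤ x) (h2 : x ≤ q) :
    clampM p q x = x := by
  unfold clampM
  split_ifs <;> simp only [Fin.lt_def, Fin.le_def, Fin.ext_iff] at * <;> omega

def FM (D : Set (Pref m)) (p q : Fin m) (x y : Fin m) : Prop :=
  StronglyConnected D x y ∧ (p ≤ x ∧ x ≤ q) ∧ (p ≤ y ∧ y ≤ q)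

theorem clamp_reach (hm : 3 ≤ m) {D : Set (Pref m)} {p q : Fin m} (hpq : p < q)
    (hs : IsHybridStar D p q) {x y : Fin m} (r : Relation.ReflTransGen (StronglyConnected D) x y) :
    Relation.ReflTransGen (FM D p q) (clampM p q x) (clampM p q y) := by
  induction r with
  | refl => exact .refl
  | tail _ e ih =>
    rename_i a b _
    rcases edge_cases hm hpq hs.1 e with ⟨h1, h2, h3, h4⟩ | ⟨-, h⟩
    · rw [clamp_id h3 h4]; rw [clamp_id h1 h2] at ih
      exact ih.tail ⟨e, ⟨h1, h2⟩, h3, h4⟩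
    · have : clampM p q a = clampM p q b := by
        unfold clampM
        rcases h with h | h
        · simp [h.1, h.2]
        · have h1 : ¬ a ≤ p := not_le.2 (lt_of_lt_of_le hpq h.1)
          have h2 : ¬ b ≤ p := not_le.2 (lt_of_lt_of_le hpq h.2)
          simp [h.1, h.2, h1, h2]
      rwa [← this]

theorem rtg_symm {α : Type} {R : α → α → Prop} (h : ∀ x y, R x y → R y x) {x y : α}
    (r : Relation.ReflTransGen R x y) : Relation.ReflTransGen R y x := by
  induction r with
  | refl => exact .refl
  | tail _ e ih => exact ih.head (h _ _ e)

end Conc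

theorem mkSch (m n : ℕ) [NeZero m] (hm : 3 ≤ m)
    (D : Set (Pref m))
    (hr : MinimallyRich D)
    (φ : Profile D n → Lottery m)
    (hu : Unanimous φ) (hsp : StrategyProof φ)
    (ψ : (Fin n → Fin m) → Lottery m)
    (hψ : ∀ P : Profile D n, ψ (fun i => topOf (P i)) = φ P) :
    Sch (StronglyConnected D) (fun X => (ψ X).1) := by
  choose T hT hT0 using hr
  have hψ' : ∀ (P : Profile D n) X, (∀ i, topOf (P i) = X i) → ψ X = φ P := by
    intro P X h
    rw [← hψ]; congr 1; ext i; rw [h]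
  refine ⟨fun X => (ψ X).2.1, fun X => (ψ X).2.2, ?_, fun _ _ h => SC_symm h, fun x h => h.1 rfl, ?_⟩
  · intro a c
    have h1 := hψ' (fun _ => ⟨T a, hT a⟩) (fun _ => a) (fun _ => hT0 a)
    have h2 := hu (fun _ => ⟨T a, hT a⟩) a (fun _ => hT0 a)
    simp only [h1, h2]; rfl
  · rintro x y ⟨hn, P, hP, P', hP', h1, h2, h3, h4, h5⟩ i X
    let B : Profile D n := fun j => ⟨T (X j), hT (X j)⟩
    have e1 := hψ' (Function.update B i ⟨P, hP⟩) (Function.update X i x) (by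
      intro j; by_cases hj : j = i
      · subst hj; simpa [topOf] using h1
      · simpa [hj, topOf, B] using hT0 _)
    have e2 := hψ' (Function.update B i ⟨P', hP'⟩) (Function.update X i y) (by
      intro j; by_cases hj : j = i
      · subst hj; simpa [topOf] using h3
      · simpa [hj, topOf, B] using hT0 _)
    have s1 := hsp i (Function.update B i ⟨P, hP⟩) ⟨P', hP'⟩
    have s2 := hsp i (Function.update B i ⟨P', hP'⟩) ⟨P, hP⟩
    simp only [Function.update_idem, Function.update_self] at s1 s2
    rw [← e1, ← e2] at s1 s2
    generalize ψ (Function.update X i x) = l1 at *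
    generalize ψ (Function.update X i y) = l2 at *
    have z0 : (⟨0, by omega⟩ : Fin m) = 0 := rfl
    have z1 : (⟨1, by omega⟩ : Fin m) = 1 := by
      apply Fin.ext; rw [Fin.val_one']; exact (Nat.mod_eq_of_lt (by omega)).symm
    have t2 : ∀ (l : Lottery m) (R : Pref m), topSum l R 1 = l.1 (R 0) := by
      intro l R
      rw [topSum_succ l R 0 (by omega), topSum_zero, zero_add]; rfl
    have t3 : ∀ (l : Lottery m) (R : Pref m), topSum l R 2 = l.1 (R 0) + l.1 (R 1) := by
      intro l R
      rw [topSum_succ l R 1 (by omega), t2, z1]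
    have hPP : ∀ (l : Lottery m) k, 2 ≤ k → k ≤ m → topSum l P k = topSum l P' k := by
      intro l k hk
      induction k, hk using Nat.le_induction with
      | base => intro _; rw [t3, t3, h1, h2, h3, h4, add_comm]
      | succ k hk ih =>
        intro hkm
        rw [topSum_succ _ _ _ (by omega), topSum_succ _ _ _ (by omega), ih (by omega),
          h5 ⟨k, by omega⟩ hk]
    have heq : ∀ k, 2 ≤ k → k ≤ m → topSum l1 P k = topSum l2 P k := by
      intro k hk hkm
      have a := s1 k hkm
      have b := s2 k hkm
      rw [← hPP _ k hk hkm, ← hPP _ k hk hkm] at b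
      linarith
    have b1 := s2 1 (by omega)
    have b2 := heq 2 le_rfl (by omega)
    rw [t2, t2, h3] at b1
    rw [t3, t3, h1, h2] at b2
    refine ⟨l2.1 y - l1.1 y, by linarith, ?_⟩
    intro c
    by_cases hcx : c = x
    · subst hcx; simp [indR, hn]; linarith
    by_cases hcy : c = y
    · subst hcy; simp [indR, hn.symm]
    obtain ⟨t, rfl⟩ := P.surjective c
    have ht : 2 ≤ (t : ℕ) := by
      by_contra hlt
      have : (t : ℕ) = 0 ∨ (t : ℕ) = 1 := by omega
      rcases this with h | h
      · apply hcx; rw [← h1]; congr 1; apply Fin.ext; simpa using h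
      · apply hcy; rw [← h2]; congr 1; rw [← z1]; apply Fin.ext; exact h
    have a := heq (t+1) (by omega) (by omega)
    rw [topSum_succ _ _ _ t.2, topSum_succ _ _ _ t.2, heq t ht (by omega)] at a
    simp only [indR, if_neg hcx, if_neg hcy]
    simp only [Fin.eta] at a
    linarith

/-- The random voting scheme induced by a unanimous, strategy-proof,
tops-only RSCF on a regular `(p,q)`-hybrid* domain (`q - p > 1`) is strategy-proof on
the full `(p,q)`-hybrid domain. -/
theorem induced_scheme_strategyproof_on_hybrid (m n : ℕ) [NeZero m] (hm : 3 ≤ m)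
    (hn : 2 ≤ n) (D : Set (Pref m)) (p q : Fin m) (hgap : (p : ℕ) + 1 < (q : ℕ))
    (hreg : RegularDomain D) (hstar : IsHybridStar D p q)
    (φ : Profile D n → Lottery m)
    (hu : Unanimous φ) (hsp : StrategyProof φ) (hto : TopsOnly φ)
    (ψ : (Fin n → Fin m) → Lottery m)
    (hψ : ∀ P : Profile D n, ψ (fun i => topOf (P i)) = φ P) :
    ∀ (i : Fin n) (Q : Fin n → Pref m), (∀ j, Q j ∈ hybridDomain p q) →
      ∀ Q' ∈ hybridDomain p q, ∀ k : ℕ, k ≤ m →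
        topSum (ψ (Function.update (fun j => (Q j) 0) i (Q' 0))) (Q i) k
          ≤ topSum (ψ (fun j => (Q j) 0)) (Q i) k := by
  intro i Q hQ Q' _ k _
  have h := mkSch m n hm D hreg.1 φ hu hsp ψ hψ
  have hpq : p < q := by rw [Fin.lt_def]; omega
  have hFsym : ∀ x y, FM D p q x y → FM D p q y x := fun x y e => ⟨SC_symm e.1, e.2.2, e.2.1⟩
  have hs : ∀ x y, FM D p q x y → ∃ z, FM D p q y z ∧ z ≠ x := by
    rintro x y ⟨e, hx, hy⟩
    by_contra hc
    push Not at hc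
    refine hstar.2.2 hgap y ⟨hy, x, ⟨hx, SC_symm e⟩, ?_⟩
    rintro z ⟨hz, e'⟩
    exact hc z ⟨e', hy, hz⟩
  have hcon : ∀ x y, Relation.ReflTransGen (StronglyConnected D) x y := fun x y =>
    (rtg_symm (fun _ _ => SC_symm) (reach0 hm hstar x)).trans (reach0 hm hstar y)
  have hMc : ∀ x y, p ≤ x → x ≤ q → p ≤ y → y ≤ q → Relation.ReflTransGen (FM D p q) x y := by
    intro x y h1 h2 h3 h4
    have := clamp_reach hm hpq hstar (hcon x y)
    rwa [clamp_id h1 h2, clamp_id h3 h4] at this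
  obtain ⟨y0, e0⟩ : ∃ y0, FM D p q p y0 := by
    rcases (hMc p q le_rfl hpq.le hpq.le le_rfl).cases_head with h | ⟨c, hc, -⟩
    · exact absurd h hpq.ne
    · exact ⟨c, hc⟩
  have hFc : ∀ u v, FM D p q u v → Relation.ReflTransGen (FM D p q) y0 v := fun u v e =>
    hMc _ _ e0.2.2.1 e0.2.2.2 e.2.2.1 e.2.2.2
  obtain ⟨δ, hδ, hM⟩ := h.l15 (FM D p q) (fun _ _ e => e.1) hFsym hs hcon e0 hFc i
    (fun j => (Q j) 0)
  obtain ⟨x, hx⟩ : ∃ x, x = Q i 0 := ⟨_, rfl⟩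
  let F : Fin m → ℝ := fun y => topSum (ψ (Function.update (fun j => (Q j) 0) i y)) (Q i) k
  suffices hF : ∀ y, F y ≤ F x by
    have := hF (Q' 0)
    simp only [F] at this
    rwa [hx, Function.update_eq_self i (fun j => (Q j) 0)] at this
  obtain ⟨i1, i2, i3⟩ := hQ i
  have htop : ∀ b, x = b ∨ Prefers (Q i) x b := by rw [hx]; exact prefers_top (Q i)
  rw [← hx] at i1 i2 i3
  -- steps along an edge
  have step : ∀ a b, StronglyConnected D a b → (a = b ∨ Prefers (Q i) a b) → F b ≤ F a := by
    intro a b e hp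
    obtain ⟨δ', h0, h1⟩ := h.shift a b e i (fun j => (Q j) 0)
    exact topSum_shift _ _ _ _ a b δ' h0 h1 hp
  have stepM : ∀ a b, p ≤ a → a ≤ q → p ≤ b → b ≤ q → (a = b ∨ Prefers (Q i) a b) → F b ≤ F a := by
    intro a b h1 h2 h3 h4 hp
    exact topSum_shift _ _ _ _ a b δ hδ (hM a b (hMc a b h1 h2 h3 h4)) hp
  have lm : ∀ t : ℕ, ∀ a b : Fin m, (b : ℕ) = a + t → b ≤ x → (b ≤ p ∨ q ≤ a) → F a ≤ F b := by
    intro t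
    induction t with
    | zero => intro a b hab _ _; have : a = b := Fin.ext (by omega); rw [this]
    | succ t ih =>
      intro a b hab hbx hc
      have hb := b.2
      obtain ⟨c, hcv⟩ : ∃ c : Fin m, (c : ℕ) = a + 1 := ⟨⟨a + 1, by omega⟩, rfl⟩
      simp only [Fin.le_def, Fin.lt_def] at *
      refine le_trans (step c a (SC_symm (line_edge hm hpq hstar hcv ?_)) ?_)
        (ih c b (by omega) hbx (by omega))
      · simp only [Fin.le_def]; omega
      · by_cases hcx : x = c
        · rw [← hcx]; exact htop a
        · right
          have : (x : ℕ) ≠ c := fun h => hcx (Fin.ext h)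
          exact i1 a c (by omega) (by omega)
  have rm : ∀ t : ℕ, ∀ a b : Fin m, (b : ℕ) = a + t → x ≤ a → (b ≤ p ∨ q ≤ a) → F b ≤ F a := by
    intro t
    induction t with
    | zero => intro a b hab _ _; have : a = b := Fin.ext (by omega); rw [this]
    | succ t ih =>
      intro a b hab hbx hc
      have hb := b.2
      obtain ⟨c, hcv⟩ : ∃ c : Fin m, (c : ℕ) = a + t := ⟨⟨a + t, by omega⟩, rfl⟩
      have hcb : (b : ℕ) = c + 1 := by omega
      simp only [Fin.le_def, Fin.lt_def] at *
      refine le_trans (step c b (line_edge hm hpq hstar hcb ?_) ?_)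
        (ih a c (by omega) hbx (by omega))
      · simp only [Fin.le_def]; omega
      · by_cases hcx : x = c
        · rw [← hcx]; exact htop b
        · right
          have : (x : ℕ) ≠ c := fun h => hcx (Fin.ext h)
          exact i1 b c (by omega) (by omega)
  have lm' : ∀ a b : Fin m, a ≤ b → b ≤ x → (b ≤ p ∨ q ≤ a) → F a ≤ F b := by
    intro a b hab h1 h2
    exact lm ((b : ℕ) - a) a b (by rw [Fin.le_def] at hab; omega) h1 h2
  have rm' : ∀ a b : Fin m, a ≤ b → x ≤ a → (b ≤ p ∨ q ≤ a) → F b ≤ F a := by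
    intro a b hab h1 h2
    exact rm ((b : ℕ) - a) a b (by rw [Fin.le_def] at hab; omega) h1 h2
  have toM : F (clampM p q x) ≤ F x := by
    unfold clampM
    split_ifs with h1 h2
    · exact rm' x p h1 le_rfl (Or.inl le_rfl)
    · exact lm' q x h2 le_rfl (Or.inr le_rfl)
    · exact le_rfl
  have inM : ∀ y, p ≤ y → y ≤ q → F y ≤ F x := by
    intro y h1 h2
    refine le_trans (stepM _ y (clamp_mem hpq x).1 (clamp_mem hpq x).2 h1 h2 ?_) toM
    by_cases hy : clampM p q x = y
    · exact Or.inl hy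
    right
    unfold clampM at hy ⊢
    split_ifs at hy ⊢ with h3 h4
    · exact i2 h3 y h1 h2 (Ne.symm hy)
    · exact i3 h4 y h1 h2 (Ne.symm hy)
    · exact (htop y).resolve_left hy
  intro y
  by_cases hyp : y ≤ p
  · rcases le_total y x with hyx | hyx
    · by_cases hxp : x ≤ p
      · exact lm' y x hyx le_rfl (Or.inl hxp)
      · exact le_trans (lm' y p hyp (le_of_not_ge hxp) (Or.inl le_rfl)) (inM p le_rfl hpq.le)
    · exact rm' x y hyx le_rfl (Or.inl hyp)
  · by_cases hyq : q ≤ y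
    · rcases le_total x y with hyx | hyx
      · by_cases hxp : q ≤ x
        · exact rm' x y hyx le_rfl (Or.inr hxp)
        · exact le_trans (rm' q y hyq (le_of_not_ge hxp) (Or.inr le_rfl)) (inM q hpq.le le_rfl)
      · exact lm' y x hyx le_rfl (Or.inr hyq)
    · exact inM y (le_of_not_ge hyp) (le_of_not_ge hyq)
end
end

section
/- Let 1 ≤ p < q ≤ m with 1 < q − p < m − 1 and let (β_S)_{S⊆N} be the probabilistic ballots of a (p, q)-PFBR on [D_≺(p, q)]^n which is anonymous (β_S = β_{S′} for all nonempty S, S′ ⊆ N with |S| = |S′|, so every conditional dictatorial coefficient equals 1/n) and satisfies per-capita monotonicity w.r.t. a_p and a_q. Then for all nonempty S ⊂ S′ ⊆ N, b̂_S^R ⪯ b̂_{S′}^R. -/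
open Finset

noncomputable section

open PFBRPaper

theorem le_lastAlt_aux {m : ℕ} [NeZero m] (a : Fin m) : a ≤ lastAlt m := by
  rw [Fin.le_def]
  have := a.2
  simp only [lastAlt]
  omega

theorem bR_ge_aux {m n : ℕ} [NeZero m] (β : Finset (Fin n) → Lottery m) (q : Fin m)
    (S : Finset (Fin n)) : q ≤ bR β q S := by
  unfold bR
  split_ifs with h
  · have := Finset.min'_mem _ h
    simp only [Finset.mem_inter, upSet, Finset.mem_filter] at this
    exact this.2.2
  · exact le_lastAlt_aux q

theorem bR_zero_aux {m n : ℕ} [NeZero m] (β : Finset (Fin n) → Lottery m) (q : Fin m)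
    (S : Finset (Fin n)) (a : Fin m) (hq : q ≤ a) (hlt : a < bR β q S) : (β S).1 a = 0 := by
  by_contra hne
  have hpos : 0 < (β S).1 a := lt_of_le_of_ne ((β S).2.1 a) (Ne.symm hne)
  have hmem : a ∈ (β S).supp ∩ upSet q := by
    simp [Lottery.supp, upSet, hpos, hq]
  have hN : ((β S).supp ∩ upSet q).Nonempty := ⟨a, hmem⟩
  unfold bR at hlt
  rw [dif_pos hN] at hlt
  exact absurd (Finset.min'_le _ a hmem) (not_le.mpr hlt)

/-- For an anonymous per-capita monotone `(p,q)`-PFBR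
(`1 < q - p < m - 1`), the right thresholds `b̂_S^R` are monotone in `S`. -/
theorem bR_monotone (m n : ℕ) [NeZero m] (hm : 3 ≤ m) (hn : 2 ≤ n)
    (p q : Fin m) (hgap1 : (p : ℕ) + 1 < (q : ℕ)) (hgap2 : (q : ℕ) - (p : ℕ) < m - 1)
    (φ : Profile (hybridDomain p q) n → Lottery m)
    (β : Finset (Fin n) → Lottery m) (hβ : IsPFBRWith φ β)
    (hanon : BallotAnonymous β) (hcrd : ConstrainedRDUniform p q β)
    (hpcm : PerCapitaMonotone p q β) :
    ∀ S S' : Finset (Fin n), S.Nonempty → S ⊂ S' → bR β q S ≤ bR β q S' := by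
  intro S S' hS hSS'
  by_cases hU : S' = Finset.univ
  · have : bR β q S' = lastAlt m := by
      unfold bR
      split_ifs with h
      · have hmem := Finset.min'_mem _ h
        generalize Finset.min' _ h = c at hmem
        rw [hU, hβ.1.1] at hmem
        by_contra hc
        have : (0 : ℝ) < if c = lastAlt m then 1 else 0 :=
          (Finset.mem_filter.mp (Finset.mem_inter.mp hmem).1).2
        rw [if_neg hc] at this
        exact lt_irrefl _ this
      · rfl
    rw [this]
    exact le_lastAlt_aux _
  · have hss : S' ⊂ Finset.univ := Finset.ssubset_univ_iff.mpr hU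
    have hqb := bR_ge_aux β q S
    have hsub : upSet (bR β q S) ⊆ upSet q := by
      intro a ha
      simp only [upSet, Finset.mem_filter, Finset.mem_univ, true_and] at ha ⊢
      exact hqb.trans ha
    have key := (hpcm S S' hS hSS' hss).1 (bR β q S) hqb
    have e1 : (β S).prob (upSet (bR β q S)) = (β S).prob (upSet q) := by
      unfold Lottery.prob
      apply Finset.sum_subset hsub
      intro a ha hna
      simp only [upSet, Finset.mem_filter, Finset.mem_univ, true_and, not_le] at ha hna
      exact bR_zero_aux β q S a ha hna
    have hc : (0 : ℝ) < S.card := by exact_mod_cast hS.card_pos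
    have hc' : (0 : ℝ) < S'.card := by exact_mod_cast (hS.mono hSS'.1).card_pos
    have hn0 : (0 : ℝ) < n := by exact_mod_cast (by omega : 0 < n)
    rw [e1, (hcrd S).1, le_div_iff₀ hc'] at key
    have e2 := (hcrd S').1
    have hle : (β S').prob (upSet q) ≤ (β S').prob (upSet (bR β q S)) := by
      rw [e2]
      refine le_trans (le_of_eq ?_) key
      field_simp
    by_contra hlt
    rw [not_le] at hlt
    have hN : ((β S').supp ∩ upSet q).Nonempty := by
      by_contra hN
      have : bR β q S' = lastAlt m := by
        unfold bR
        rw [dif_neg hN]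
      rw [this] at hlt
      exact absurd (le_lastAlt_aux _) (not_le.mpr hlt)
    have hmem : bR β q S' ∈ (β S').supp ∩ upSet q := by
      have := Finset.min'_mem _ hN
      unfold bR
      rw [dif_pos hN]
      exact this
    have hm2 := Finset.mem_inter.mp hmem
    have hpos : 0 < (β S').1 (bR β q S') := (Finset.mem_filter.mp hm2.1).2
    have : (β S').prob (upSet (bR β q S)) < (β S').prob (upSet q) := by
      unfold Lottery.prob
      refine Finset.sum_lt_sum_of_subset hsub hm2.2 ?_ hpos (fun a _ _ => (β S').2.1 a)
      simp only [upSet, Finset.mem_filter, Finset.mem_univ, true_and, not_le]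
      exact hlt
    exact absurd hle (not_le.mpr this)
end
end

section
/- Let 1 ≤ p < q ≤ m with 1 < q − p < m − 1 and let (β_S)_{S⊆N} be the probabilistic ballots of a (p, q)-PFBR on [D_≺(p, q)]^n which is anonymous (β_S = β_{S′} for all nonempty S, S′ ⊆ N with |S| = |S′|, so every conditional dictatorial coefficient equals 1/n) and satisfies per-capita monotonicity w.r.t. a_p and a_q. Then for all S ⊂ S′ ⊂ N, b̂_S^L ⪯ b̂_{S′}^L. -/
open Finset

noncomputable section

open PFBRPaper

/-- For an anonymous per-capita monotone `(p,q)`-PFBR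
(`1 < q - p < m - 1`), the left thresholds `b̂_S^L` are monotone in `S`. -/
theorem bL_monotone (m n : ℕ) [NeZero m] (hm : 3 ≤ m) (hn : 2 ≤ n)
    (p q : Fin m) (hgap1 : (p : ℕ) + 1 < (q : ℕ)) (hgap2 : (q : ℕ) - (p : ℕ) < m - 1)
    (φ : Profile (hybridDomain p q) n → Lottery m)
    (β : Finset (Fin n) → Lottery m) (hβ : IsPFBRWith φ β)
    (hanon : BallotAnonymous β) (hcrd : ConstrainedRDUniform p q β)
    (hpcm : PerCapitaMonotone p q β) :
    ∀ S S' : Finset (Fin n), S ⊂ S' → S' ⊂ Finset.univ → bL β p S ≤ bL β p S' := by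
  intro S S' hSS hS'
  rcases S.eq_empty_or_nonempty with rfl | hne
  · have h0 : bL β p (∅ : Finset (Fin n)) = 0 := by
      unfold bL
      split_ifs with h
      · have hmem := Finset.max'_mem _ h
        rw [Finset.mem_inter] at hmem
        have h1 := hmem.1
        have key : ∀ a, a ∈ (β (∅ : Finset (Fin n))).supp → a = 0 := by
          intro a ha
          rw [hβ.1.2] at ha
          by_contra hc
          have h2 : (0 : ℝ) < if a = 0 then 1 else 0 := (Finset.mem_filter.1 ha).2
          rw [if_neg hc] at h2
          exact lt_irrefl _ h2
        exact key _ h1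
      · rfl
    rw [h0]
    exact Fin.zero_le _
  have hnpos : (0 : ℝ) < n := by
    have : 0 < n := by omega
    exact_mod_cast this
  have hT : (S'ᶜ : Finset (Fin n)).Nonempty := by
    rw [Finset.nonempty_iff_ne_empty, Ne, Finset.compl_eq_empty_iff]
    exact hS'.ne
  have hTT : (S'ᶜ : Finset (Fin n)) ⊂ Sᶜ := Finset.compl_ssubset_compl.2 hSS
  have hTu : (Sᶜ : Finset (Fin n)) ⊂ Finset.univ := by
    rw [Finset.ssubset_univ_iff, Ne, Finset.compl_eq_univ_iff]
    exact hne.ne_empty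
  have hTpos : (0 : ℝ) < (S'ᶜ : Finset (Fin n)).card := by
    exact_mod_cast hT.card_pos
  have hT'pos : (0 : ℝ) < (Sᶜ : Finset (Fin n)).card := by
    exact_mod_cast (hT.mono hTT.subset).card_pos
  have hbp : bL β p S' ≤ p := by
    unfold bL
    split_ifs with h
    · have hmem := Finset.max'_mem _ h
      rw [Finset.mem_inter] at hmem
      simpa [downSet] using hmem.2
    · exact Fin.zero_le _
  have hfull : (β S').prob (downSet (bL β p S')) = (β S').prob (downSet p) := by
    unfold Lottery.prob
    apply Finset.sum_subset
    · intro a ha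
      simp only [downSet, Finset.mem_filter, Finset.mem_univ, true_and] at ha ⊢
      exact ha.trans hbp
    · intro a ha hna
      by_contra hne0
      apply hna
      have hpos : 0 < (β S').1 a := lt_of_le_of_ne ((β S').2.1 a) (Ne.symm hne0)
      have hmem : a ∈ (β S').supp ∩ downSet p := by
        rw [Finset.mem_inter]
        exact ⟨by simpa [Lottery.supp] using hpos, ha⟩
      have hle : a ≤ bL β p S' := by
        unfold bL
        rw [dif_pos ⟨a, hmem⟩]
        exact Finset.le_max' _ _ hmem
      simpa [downSet] using hle
  have hpc := (hpcm _ _ hT hTT hTu).2 (bL β p S') hbp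
  rw [compl_compl, compl_compl, hfull, (hcrd S').2] at hpc
  have hge : (β S).prob (downSet p) ≤ (β S).prob (downSet (bL β p S')) := by
    rw [(hcrd S).2]
    rw [le_div_iff₀ hT'pos] at hpc
    refine le_trans (le_of_eq ?_) hpc
    field_simp
  by_contra hlt
  have hlt : bL β p S' < bL β p S := not_le.1 hlt
  by_cases h : ((β S).supp ∩ downSet p).Nonempty
  · have heq : bL β p S = ((β S).supp ∩ downSet p).max' h := by
      unfold bL
      rw [dif_pos h]
    have hmem := Finset.max'_mem _ h
    rw [← heq, Finset.mem_inter] at hmem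
    have hpos : 0 < (β S).1 (bL β p S) := by simpa [Lottery.supp] using hmem.1
    have : (β S).prob (downSet (bL β p S')) < (β S).prob (downSet p) := by
      unfold Lottery.prob
      refine Finset.sum_lt_sum_of_subset ?_ hmem.2 ?_ hpos (fun j _ _ => (β S).2.1 j)
      · intro a ha
        simp only [downSet, Finset.mem_filter, Finset.mem_univ, true_and] at ha ⊢
        exact ha.trans hbp
      · simpa [downSet] using hlt
    exact absurd hge (not_le.2 this)
  · have h0 : bL β p S = 0 := by
      unfold bL
      rw [dif_neg h]
    rw [h0] at hlt
    exact absurd (Fin.zero_le _) (not_le.2 hlt)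
end
end

section
/- Let 1 ≤ p < q ≤ m with 1 < q − p < m − 1, and let φ be a (p, q)-PFBR on [D_≺(p, q)]^n with probabilistic ballots (β_S)_{S⊆N} which is anonymous (β_S = β_{S′} for all nonempty S, S′ ⊆ N with |S| = |S′|, so every conditional dictatorial coefficient equals 1/n) and satisfies per-capita monotonicity w.r.t. a_p and a_q. Define α = min over nonempty S ⊂ N of min( β_S(b̂_S^R)/|S| , β_S(b̂_S^L)/(n − |S|) ). Then α = 1/n if and only if |supp(β_S)| = 2 for every nonempty S ⊂ N; moreover, if α = 1/n, then β_S = (|S|/n) e_{b̂_S^R} + ((n − |S|)/n) e_{b̂_S^L} for every nonempty S ⊂ N, and φ is decomposable. -/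
open Finset

noncomputable section

open PFBRPaper

section Helpers

variable {m n : ℕ} [NeZero m]

lemma le_bR (β : Finset (Fin n) → Lottery m) (q : Fin m) (S : Finset (Fin n)) : q ≤ bR β q S := by
  unfold bR
  split_ifs with h
  · have := Finset.min'_mem _ h
    simp only [Finset.mem_inter, upSet, Finset.mem_filter] at this
    exact this.2.2
  · have := q.2
    rw [Fin.le_def]; simp only [lastAlt]; omega

lemma bL_le (β : Finset (Fin n) → Lottery m) (p : Fin m) (S : Finset (Fin n)) : bL β p S ≤ p := by
  unfold bL
  split_ifs with h
  · have := Finset.max'_mem _ h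
    simp only [Finset.mem_inter, downSet, Finset.mem_filter] at this
    exact this.2.2
  · exact Fin.zero_le _

lemma le_lastAlt (a : Fin m) : a ≤ lastAlt m := by
  have := a.2
  rw [Fin.le_def]; simp only [lastAlt]; omega

lemma supp_deg (a : Fin m) : (degLottery a).supp = {a} := by
  ext b
  rw [Lottery.supp, Finset.mem_filter, Finset.mem_singleton]
  show b ∈ Finset.univ ∧ (0 : ℝ) < (if b = a then 1 else 0) ↔ b = a
  by_cases h : b = a <;> simp [h]

lemma bR_univ (β : Finset (Fin n) → Lottery m) (q : Fin m)
    (h : β Finset.univ = degLottery (lastAlt m)) : bR β q Finset.univ = lastAlt m := by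
  unfold bR
  split_ifs with h'
  · have := Finset.min'_mem _ h'
    generalize Finset.min' _ h' = x at this
    rw [h] at this
    rw [Finset.mem_inter, supp_deg, Finset.mem_singleton] at this
    exact this.1
  · rfl

lemma bL_empty (β : Finset (Fin n) → Lottery m) (p : Fin m)
    (h : β ∅ = degLottery 0) : bL β p ∅ = 0 := by
  unfold bL
  split_ifs with h'
  · have := Finset.max'_mem _ h'
    generalize Finset.max' _ h' = x at this
    rw [h] at this
    rw [Finset.mem_inter, supp_deg, Finset.mem_singleton] at this
    exact this.1
  · rfl

/-- deterministic fixed ballot rule -/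
def fRule {D : Set (Pref m)} (b : Finset (Fin n) → Fin m) (P : Profile D n) : Fin m :=
  if h : (Finset.univ.filter (fun k : Fin m => k ≤ b (voterSet P k))).Nonempty then
    (Finset.univ.filter (fun k : Fin m => k ≤ b (voterSet P k))).max' h else 0

lemma voterSet_anti {D : Set (Pref m)} (P : Profile D n) {j k : Fin m} (h : j ≤ k) :
    voterSet P k ⊆ voterSet P j := by
  intro i hi
  simp only [voterSet, Finset.mem_filter, Finset.mem_univ, true_and] at hi ⊢
  exact h.trans hi

lemma le_fRule {D : Set (Pref m)} (b : Finset (Fin n) → Fin m)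
    (hb : ∀ S T, S ⊆ T → b S ≤ b T) (P : Profile D n) (k : Fin m) :
    k ≤ fRule b P ↔ k ≤ b (voterSet P k) := by
  have hne : (Finset.univ.filter (fun k : Fin m => k ≤ b (voterSet P k))).Nonempty :=
    ⟨0, by simp⟩
  unfold fRule
  rw [dif_pos hne]
  constructor
  · intro h
    have := Finset.max'_mem _ hne
    generalize Finset.max' _ hne = x at this h
    simp only [Finset.mem_filter, Finset.mem_univ, true_and] at this
    exact (h.trans this).trans (hb _ _ (voterSet_anti P h))
  · intro h
    exact Finset.le_max' _ _ (by simpa using h)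

lemma fRule_unanimous {D : Set (Pref m)} (b : Finset (Fin n) → Fin m)
    (hb : ∀ S T, S ⊆ T → b S ≤ b T) (h0 : b ∅ = 0) (h1 : b Finset.univ = lastAlt m) :
    Unanimous (fun P : Profile D n => degLottery (fRule b P)) := by
  intro P a ha
  have : fRule b P = a := by
    apply le_antisymm
    · by_contra hlt
      push Not at hlt
      have h := (le_fRule b hb P (fRule b P)).1 le_rfl
      have he : voterSet P (fRule b P) = ∅ := by
        simp [voterSet, ha, hlt]
      rw [he, h0] at h
      exact absurd (lt_of_le_of_lt (Fin.zero_le a) hlt) (not_lt.2 h)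
    · rw [le_fRule b hb]
      have he : voterSet P a = Finset.univ := by
        ext i
        simp [voterSet, ha]
      rw [he, h1]
      exact le_lastAlt a
  simp only [this]

lemma hyb_up {p q : Fin m} (hpq : p < q) {P : Pref m} (hP : IsHybridPref p q P) {y z : Fin m}
    (h1 : P 0 < y) (h2 : y < z) (h3 : y ≤ p ∨ q ≤ y) : Prefers P y z := by
  obtain ⟨hi, hp, hq⟩ := hP
  rcases h3 with h3 | h3
  · rcases le_or_gt z p with hz | hz
    · exact hi z y (Or.inl ⟨hz, h3⟩) (Or.inr ⟨h1, h2⟩)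
    · have a1 : P.symm y ≤ P.symm p := by
        rcases h3.eq_or_lt with h | h
        · rw [h]
        · exact le_of_lt (hi p y (Or.inl ⟨le_rfl, h3⟩) (Or.inr ⟨h1, h⟩))
      have a2 : Prefers P p z := by
        have hp' := hp (h1.le.trans h3)
        rcases le_or_gt z q with hzq | hzq
        · exact hp' z hz.le hzq hz.ne'
        · have b1 : Prefers P p q := hp' q hpq.le le_rfl hpq.ne'
          have b2 : Prefers P q z :=
            hi z q (Or.inr ⟨hzq.le, le_rfl⟩) (Or.inr ⟨(h1.trans_le h3).trans hpq, hzq⟩)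
          exact lt_trans b1 b2
      exact lt_of_le_of_lt a1 a2
  · exact hi z y (Or.inr ⟨h3.trans h2.le, h3⟩) (Or.inr ⟨h1, h2⟩)

lemma hyb_down {p q : Fin m} (hpq : p < q) {P : Pref m} (hP : IsHybridPref p q P) {y z : Fin m}
    (h1 : y < P 0) (h2 : z < y) (h3 : y ≤ p ∨ q ≤ y) : Prefers P y z := by
  obtain ⟨hi, hp, hq⟩ := hP
  rcases h3 with h3 | h3
  · exact hi z y (Or.inl ⟨h2.le.trans h3, h3⟩) (Or.inl ⟨h2, h1⟩)
  · rcases le_or_gt q z with hz | hz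
    · exact hi z y (Or.inr ⟨hz, h3⟩) (Or.inl ⟨h2, h1⟩)
    · have a1 : P.symm y ≤ P.symm q := by
        rcases h3.eq_or_lt with h | h
        · rw [h]
        · exact le_of_lt (hi q y (Or.inr ⟨le_rfl, h3⟩) (Or.inl ⟨h, h1⟩))
      have a2 : Prefers P q z := by
        have hq' := hq (h3.trans h1.le)
        rcases le_or_gt p z with hzq | hzq
        · exact hq' z hzq hz.le hz.ne
        · have b1 : Prefers P q p := hq' p le_rfl hpq.le hpq.ne
          have b2 : Prefers P p z :=
            hi z p (Or.inl ⟨hzq.le, le_rfl⟩) (Or.inl ⟨hzq, hpq.trans (h3.trans_lt h1)⟩)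
          exact lt_trans b1 b2
      exact lt_of_le_of_lt a1 a2

lemma topSum_deg (a : Fin m) (P : Pref m) (k : ℕ) :
    topSum (degLottery a) P k = if (P.symm a : ℕ) < k then 1 else 0 := by
  unfold topSum degLottery
  simp only
  rw [Finset.sum_ite, Finset.sum_const_zero, add_zero, Finset.filter_filter]
  have : ∀ t : Fin m, P t = a ↔ t = P.symm a := fun t => (Equiv.eq_symm_apply P).symm
  simp only [this]
  split_ifs with h
  · have : (Finset.univ.filter (fun t : Fin m => (t:ℕ) < k ∧ t = P.symm a)) = {P.symm a} := by
      ext t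
      simp only [Finset.mem_filter, Finset.mem_univ, true_and, Finset.mem_singleton]
      constructor
      · exact fun h => h.2
      · rintro rfl; exact ⟨h, rfl⟩
    rw [this]; simp
  · apply Finset.sum_eq_zero
    intro t ht
    simp only [Finset.mem_filter, Finset.mem_univ, true_and] at ht
    exact absurd (ht.2 ▸ ht.1) h

lemma fRule_sp {p q : Fin m} (hpq : p < q) (b : Finset (Fin n) → Fin m)
    (hb : ∀ S T, S ⊆ T → b S ≤ b T) (i : Fin n) (hi1 : ∀ S, i ∈ S → q ≤ b S)
    (hi2 : ∀ S, i ∉ S → b S ≤ p) :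
    StrategyProof (fun P : Profile (hybridDomain p q) n => degLottery (fRule b P)) := by
  -- position of outcome relative to the dictator's top
  have hlow : ∀ P : Profile (hybridDomain p q) n, ∀ k, k ≤ topOf (P i) → k ≤ q →
      k ≤ fRule b P := by
    intro P k h1 h2
    rw [le_fRule b hb]
    exact h2.trans (hi1 _ (by simpa [voterSet] using h1))
  have hup : ∀ P : Profile (hybridDomain p q) n, ∀ k, topOf (P i) < k → p < k →
      fRule b P < k := by
    intro P k h1 h2
    rw [← not_le, le_fRule b hb, not_le]
    exact lt_of_le_of_lt (hi2 _ (by simpa [voterSet] using h1)) h2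
  have hmid : ∀ P : Profile (hybridDomain p q) n, p < fRule b P → fRule b P < q →
      topOf (P i) = fRule b P := by
    intro P h1 h2
    apply le_antisymm
    · by_contra h
      push Not at h
      rcases le_total (topOf (P i)) q with hh | hh
      · exact absurd (hlow P _ le_rfl hh) (not_le.2 h)
      · exact absurd (hlow P q hh le_rfl) (not_le.2 h2)
    · by_contra h
      push Not at h
      exact lt_irrefl _ (hup P _ h h1)
  have hmid' : ∀ P : Profile (hybridDomain p q) n, p < topOf (P i) → topOf (P i) < q →
      topOf (P i) = fRule b P := by
    intro P h1 h2
    apply le_antisymm (hlow P _ le_rfl h2.le)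
    by_contra h
    push Not at h
    exact lt_irrefl _ (hup P _ h (h1.trans h))
  intro j P Q k _
  simp only [topSum_deg]
  set P' := Function.update P j Q with hP'
  have hother : ∀ l, l ≠ j → P' l = P l := fun l hl => by simp [hP', hl]
  have key : (P j).1.symm (fRule b P) ≤ (P j).1.symm (fRule b P') := by
    rcases eq_or_ne (fRule b P) (fRule b P') with he | hne
    · rw [he]
    rcases lt_trichotomy (topOf (P j)) (fRule b P) with hlt | heq | hgt
    · have hle : fRule b P ≤ fRule b P' := by
        rw [le_fRule b hb]
        refine ((le_fRule b hb P _).1 le_rfl).trans (hb _ _ ?_)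
        intro l hl
        simp only [voterSet, Finset.mem_filter, Finset.mem_univ, true_and] at hl ⊢
        have : l ≠ j := by rintro rfl; exact absurd hl (not_le.2 hlt)
        rwa [hother l this]
      refine le_of_lt (hyb_up hpq (P j).2 hlt (lt_of_le_of_ne hle hne) ?_)
      by_contra hc
      push Not at hc
      have ht := hmid P hc.1 hc.2
      have hij : i ≠ j := by rintro rfl; exact hlt.ne ht
      have := hmid' P' (by rw [hother i hij, ht]; exact hc.1) (by rw [hother i hij, ht]; exact hc.2)
      rw [hother i hij, ht] at this
      exact hne this
    · have : (P j).1.symm (fRule b P) = 0 := by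
        rw [← heq]; simp [topOf]
      rw [this]; exact Fin.zero_le _
    · have hle : fRule b P' ≤ fRule b P := by
        by_contra hc
        push Not at hc
        have hmem := (le_fRule b hb P' _).1 (le_refl (fRule b P'))
        rcases le_or_gt (fRule b P') (topOf (P j)) with h | h
        · have : fRule b P' ≤ fRule b P := by
            rw [le_fRule b hb P]
            refine hmem.trans (hb _ _ ?_)
            intro l hl
            simp only [voterSet, Finset.mem_filter, Finset.mem_univ, true_and] at hl ⊢
            by_cases hlj : l = j
            · rw [hlj]; exact h
            · rwa [hother l hlj] at hl
          exact absurd this (not_le.2 hc)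
        · have h2 : topOf (P j) ≤ fRule b P' := h.le
          rw [le_fRule b hb] at h2
          have : topOf (P j) ≤ fRule b P := by
            rw [le_fRule b hb P]
            refine h2.trans (hb _ _ ?_)
            intro l hl
            simp only [voterSet, Finset.mem_filter, Finset.mem_univ, true_and] at hl ⊢
            by_cases hlj : l = j
            · rw [hlj]
            · rwa [hother l hlj] at hl
          exact absurd this (not_le.2 hgt)
      refine le_of_lt (hyb_down hpq (P j).2 hgt (lt_of_le_of_ne hle hne.symm) ?_)
      by_contra hc
      push Not at hc
      have ht := hmid P hc.1 hc.2
      have hij : i ≠ j := by rintro rfl; exact hgt.ne' ht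
      have := hmid' P' (by rw [hother i hij, ht]; exact hc.1) (by rw [hother i hij, ht]; exact hc.2)
      rw [hother i hij, ht] at this
      exact hne this
  have key' : ((P j).1.symm (fRule b P) : ℕ) ≤ ((P j).1.symm (fRule b P') : ℕ) := key
  split_ifs <;> first | omega | norm_num

/-- two-point facts -/
lemma gamma_of_full (β : Finset (Fin n) → Lottery m) {p q : Fin m} (hpq : p < q) (hn : 2 ≤ n)
    (S : Finset (Fin n))
    (h1 : (β S).1 (bR β q S) = (S.card : ℝ) / n)
    (h2 : (β S).1 (bL β p S) = ((n : ℝ) - S.card) / n) (a : Fin m) :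
    (β S).1 a = gammaFun β p q S a := by
  have hne : bR β q S ≠ bL β p S :=
    ne_of_gt ((bL_le β p S).trans_lt (hpq.trans_le (le_bR β q S)))
  have hn0 : (n : ℝ) ≠ 0 := by positivity
  unfold gammaFun
  by_cases ha : a = bR β q S
  · subst ha; rw [if_pos rfl, if_neg hne, h1]; ring
  by_cases hb : a = bL β p S
  · subst hb; rw [if_pos rfl, if_neg hne.symm, h2]; ring
  rw [if_neg ha, if_neg hb]
  have hs := Finset.sum_le_univ_sum_of_nonneg (s := {a, bR β q S, bL β p S}) (β S).2.1
  rw [(β S).2.2, Finset.sum_insert (by simp [ha, hb]), Finset.sum_pair hne, h1, h2] at hs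
  have h3 : (S.card : ℝ) / n + ((n : ℝ) - S.card) / n = 1 := by field_simp; ring
  have := (β S).2.1 a
  linarith

lemma prob_up_gamma (β : Finset (Fin n) → Lottery m) {p q : Fin m} (S : Finset (Fin n))
    (h : ∀ a, (β S).1 a = gammaFun β p q S a) (k : Fin m) :
    (β S).prob (upSet k) = ((S.card : ℝ) / n) * (if k ≤ bR β q S then 1 else 0)
      + (((n : ℝ) - S.card) / n) * (if k ≤ bL β p S then 1 else 0) := by
  unfold Lottery.prob
  simp only [h, gammaFun]
  rw [Finset.sum_add_distrib, ← Finset.mul_sum, ← Finset.mul_sum]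
  simp [upSet]

lemma prob_down_gamma (β : Finset (Fin n) → Lottery m) {p q : Fin m} (S : Finset (Fin n))
    (h : ∀ a, (β S).1 a = gammaFun β p q S a) (k : Fin m) :
    (β S).prob (downSet k) = ((S.card : ℝ) / n) * (if bR β q S ≤ k then 1 else 0)
      + (((n : ℝ) - S.card) / n) * (if bL β p S ≤ k then 1 else 0) := by
  unfold Lottery.prob
  simp only [h, gammaFun]
  rw [Finset.sum_add_distrib, ← Finset.mul_sum, ← Finset.mul_sum]
  simp [downSet]

lemma decomp_of_gamma (hn : 2 ≤ n) {p q : Fin m} (hpq : p < q)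
    (φ : Profile (hybridDomain p q) n → Lottery m)
    (β : Finset (Fin n) → Lottery m) (hβ : IsPFBRWith φ β)
    (hpcm : PerCapitaMonotone p q β)
    (hg : ∀ S : Finset (Fin n), S.Nonempty → S ≠ Finset.univ →
        ∀ a : Fin m, (β S).1 a = gammaFun β p q S a) : Decomposable φ := by
  obtain ⟨⟨hU, hE⟩, -, hφ⟩ := hβ
  have hn0 : (0 : ℝ) < n := by positivity
  have hLR : ∀ S T, bL β p S < bR β q T := fun S T =>
    (bL_le β p S).trans_lt (hpq.trans_le (le_bR β q T))
  have hG : ∀ S a, (β S).1 a = gammaFun β p q S a := by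
    intro S a
    rcases S.eq_empty_or_nonempty with rfl | hS
    · unfold gammaFun
      rw [bL_empty β p hE, hE]
      simp [degLottery, hn0.ne']
    by_cases hS' : S = Finset.univ
    · subst hS'
      unfold gammaFun
      rw [bR_univ β q hU, hU]
      simp [degLottery, hn0.ne']
    exact hg S hS hS' a
  have hmR : ∀ S T, S.Nonempty → S ⊆ T → bR β q S ≤ bR β q T := by
    intro S T hS hST
    rcases eq_or_ne S T with rfl | hne
    · exact le_rfl
    by_cases hT : T = Finset.univ
    · subst hT; rw [bR_univ β q hU]; exact le_lastAlt _
    have := (hpcm S T hS (hST.ssubset_of_ne hne)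
      ((Finset.subset_univ T).ssubset_of_ne hT)).1 (bR β q S) (le_bR β q S)
    rw [prob_up_gamma β S (hG S), prob_up_gamma β T (hG T)] at this
    by_contra hc
    rw [if_pos le_rfl, if_neg (not_le.2 (hLR S S)), if_neg hc, if_neg (not_le.2 (hLR T S))] at this
    have hc : (0 : ℝ) < S.card := by exact_mod_cast hS.card_pos
    have : (0 : ℝ) < (S.card / n * 1 + (n - S.card) / n * 0) / S.card := by
      rw [mul_zero, add_zero, mul_one]; positivity
    simp at *
    linarith
  have hmL : ∀ S T, T ≠ Finset.univ → S ⊆ T → bL β p S ≤ bL β p T := by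
    intro S T hT hST
    rcases eq_or_ne S T with rfl | hne
    · exact le_rfl
    rcases S.eq_empty_or_nonempty with rfl | hS
    · rw [bL_empty β p hE]; exact Fin.zero_le _
    have h0 : Tᶜ.Nonempty := by
      rw [Finset.nonempty_iff_ne_empty]; simpa using hT
    have := (hpcm Tᶜ Sᶜ h0 (by simpa using hST.ssubset_of_ne hne)
      ((Finset.subset_univ _).ssubset_of_ne (by simpa using hS.ne_empty))).2 (bL β p T) (bL_le β p T)
    rw [compl_compl, compl_compl, prob_down_gamma β S (hG S), prob_down_gamma β T (hG T)] at this
    by_contra hc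
    rw [if_pos le_rfl, if_neg (not_le.2 (hLR T T)), if_neg hc, if_neg (not_le.2 (hLR T S))] at this
    have hc : (0 : ℝ) < (Tᶜ).card := by exact_mod_cast h0.card_pos
    have hc' : (0 : ℝ) < n - T.card := by
      have := Finset.card_lt_univ_of_notMem (Finset.mem_compl.1 h0.choose_spec)
      rw [Fintype.card_fin] at this
      have : (T.card : ℝ) < n := by exact_mod_cast this
      linarith
    have : (0 : ℝ) < (T.card / n * 0 + (n - T.card) / n * 1) / Tᶜ.card := by
      rw [mul_zero, zero_add, mul_one]; positivity
    simp at *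
    linarith
  let b : Fin n → Finset (Fin n) → Fin m := fun i S => if i ∈ S then bR β q S else bL β p S
  have hb : ∀ i S T, S ⊆ T → b i S ≤ b i T := by
    intro i S T hST
    simp only [b]
    by_cases h1 : i ∈ S
    · rw [if_pos h1, if_pos (hST h1)]
      exact hmR S T ⟨i, h1⟩ hST
    by_cases h2 : i ∈ T
    · rw [if_neg h1, if_pos h2]
      exact (hLR S T).le
    · rw [if_neg h1, if_neg h2]
      exact hmL S T (fun h => h2 (h ▸ Finset.mem_univ i)) hST
  refine ⟨n, fun i => fRule (b i), fun _ => 1 / (n : ℝ), fun _ => by positivity, ?_, ?_, ?_⟩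
  · simp [hn0.ne']
  · intro i
    refine ⟨fRule_unanimous (b i) (hb i) ?_ ?_, fRule_sp hpq (b i) (hb i) i ?_ ?_⟩
    · simp [b, bL_empty β p hE]
    · simp [b, bR_univ β q hU]
    · intro S hS; simp only [b, if_pos hS]; exact le_bR β q S
    · intro S hS; simp only [b, if_neg hS]; exact bL_le β p S
  · intro P a
    have hsum : ∀ S k, (β S).prob (upSet k) = ∑ i, 1 / (n : ℝ) * (if k ≤ b i S then 1 else 0) := by
      intro S k
      rw [prob_up_gamma β S (hG S), ← Finset.sum_add_sum_compl S]
      have e1 : ∑ i ∈ S, 1 / (n : ℝ) * (if k ≤ b i S then (1 : ℝ) else 0)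
          = ∑ i ∈ S, 1 / (n : ℝ) * (if k ≤ bR β q S then 1 else 0) :=
        Finset.sum_congr rfl (fun i hi => by simp only [b, if_pos hi])
      have e2 : ∑ i ∈ Sᶜ, 1 / (n : ℝ) * (if k ≤ b i S then (1 : ℝ) else 0)
          = ∑ i ∈ Sᶜ, 1 / (n : ℝ) * (if k ≤ bL β p S then 1 else 0) :=
        Finset.sum_congr rfl (fun i hi => by simp only [b, if_neg (Finset.mem_compl.1 hi)])
      have hle : S.card ≤ n := by simpa using Finset.card_le_univ S
      rw [e1, e2, Finset.sum_const, Finset.sum_const, Finset.card_compl, Fintype.card_fin,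
        nsmul_eq_mul, nsmul_eq_mul, Nat.cast_sub hle]
      ring
    have htail : ∀ k : ℕ, tailProb β P k
        = ∑ i, 1 / (n : ℝ) * (if k ≤ (fRule (b i) P : ℕ) then 1 else 0) := by
      intro k
      unfold tailProb
      split_ifs with hk
      · rw [hsum]
        refine Finset.sum_congr rfl (fun i _ => ?_)
        have := le_fRule (b i) (hb i) P ⟨k, hk⟩
        rw [Fin.le_def (b := fRule (b i) P)] at this
        simp only [← this]
      · symm
        apply Finset.sum_eq_zero
        intro i _
        rw [if_neg (by have := (fRule (b i) P).2; omega), mul_zero]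
    rw [hφ, htail, htail, ← Finset.sum_sub_distrib]
    refine Finset.sum_congr rfl (fun i _ => ?_)
    rw [← mul_sub]
    congr 1
    have : fRule (b i) P = a ↔ (fRule (b i) P : ℕ) = (a : ℕ) := Fin.ext_iff
    simp only [this]
    split_ifs <;> first | omega | norm_num

end Helpers

/-- `α = 1/n` iff every ballot of a nonempty proper coalition has binary
support; and in that case the ballots are the two-point lotteries
`(|S|/n) e_{b̂_S^R} + ((n-|S|)/n) e_{b̂_S^L}` and the PFBR is decomposable. -/
theorem alpha_eq_one_over_n (m n : ℕ) [NeZero m] (hm : 3 ≤ m) (hn : 2 ≤ n)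
    (p q : Fin m) (hgap1 : (p : ℕ) + 1 < (q : ℕ)) (hgap2 : (q : ℕ) - (p : ℕ) < m - 1)
    (φ : Profile (hybridDomain p q) n → Lottery m)
    (β : Finset (Fin n) → Lottery m) (hβ : IsPFBRWith φ β)
    (hanon : BallotAnonymous β) (hcrd : ConstrainedRDUniform p q β)
    (hpcm : PerCapitaMonotone p q β) :
    (alphaVal β p q = 1 / (n : ℝ) ↔
      ∀ S : Finset (Fin n), S.Nonempty → S ≠ Finset.univ → (β S).supp.card = 2) ∧
    (alphaVal β p q = 1 / (n : ℝ) →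
      (∀ S : Finset (Fin n), S.Nonempty → S ≠ Finset.univ →
        ∀ a : Fin m, (β S).1 a = gammaFun β p q S a) ∧
      Decomposable φ) := by
  have hpq : p < q := by rw [Fin.lt_def]; omega
  have hn0 : (0 : ℝ) < n := by positivity
  have hcard : ∀ S : Finset (Fin n), ((Sᶜ : Finset (Fin n)).card : ℝ) = n - S.card := by
    intro S
    have hle : S.card ≤ n := by simpa using Finset.card_le_univ S
    rw [Finset.card_compl, Fintype.card_fin, Nat.cast_sub hle]
  have hpos : ∀ S : Finset (Fin n), S.Nonempty → (0 : ℝ) < S.card := by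
    intro S hS; exact_mod_cast hS.card_pos
  have hpos' : ∀ S : Finset (Fin n), S ≠ Finset.univ → (0 : ℝ) < n - S.card := by
    intro S hS
    rw [← hcard]
    apply hpos
    rw [Finset.nonempty_iff_ne_empty]; simpa using hS
  have hRle : ∀ S, (β S).1 (bR β q S) ≤ S.card / n := by
    intro S
    rw [← (hcrd S).1]
    exact Finset.single_le_sum (f := (β S).1) (fun a _ => (β S).2.1 a)
      (by simpa [upSet] using le_bR β q S)
  have hLle : ∀ S : Finset (Fin n), (β S).1 (bL β p S) ≤ ((n : ℝ) - S.card) / n := by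
    intro S
    rw [← hcard, ← (hcrd S).2]
    exact Finset.single_le_sum (f := (β S).1) (fun a _ => (β S).2.1 a)
      (by simpa [downSet] using bL_le β p S)
  have hne : ∀ S, bR β q S ≠ bL β p S := fun S =>
    ne_of_gt ((bL_le β p S).trans_lt (hpq.trans_le (le_bR β q S)))
  have hfull : alphaVal β p q = 1 / (n : ℝ) → ∀ S : Finset (Fin n), S.Nonempty →
      S ≠ Finset.univ → (β S).1 (bR β q S) = (S.card : ℝ) / n ∧
        (β S).1 (bL β p S) = ((n : ℝ) - S.card) / n := by
    intro hα S hS hS'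
    have hc := hpos S hS
    have hc' := hpos' S hS'
    have h1 : 1 / (n : ℝ) ≤ min ((β S).1 (bR β q S) / (S.card : ℝ))
            ((β S).1 (bL β p S) / ((n : ℝ) - (S.card : ℝ))) := by
      rw [← hα]
      refine csInf_le ⟨0, ?_⟩ ⟨S, hS, hS', rfl⟩
      rintro x ⟨T, hT, hT', rfl⟩
      exact le_min (div_nonneg ((β T).2.1 _) (hpos T hT).le)
        (div_nonneg ((β T).2.1 _) (hpos' T hT').le)
    rw [le_min_iff, le_div_iff₀ hc, le_div_iff₀ hc'] at h1
    refine ⟨le_antisymm (hRle S) ?_, le_antisymm (hLle S) ?_⟩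
    · have := h1.1; rwa [one_div_mul_eq_div] at this
    · have := h1.2; rwa [one_div_mul_eq_div] at this
  have hgam : alphaVal β p q = 1 / (n : ℝ) → ∀ S : Finset (Fin n), S.Nonempty →
      S ≠ Finset.univ → ∀ a : Fin m, (β S).1 a = gammaFun β p q S a := by
    intro hα S hS hS' a
    obtain ⟨h1, h2⟩ := hfull hα S hS hS'
    exact gamma_of_full β hpq hn S h1 h2 a
  refine ⟨⟨?_, ?_⟩, fun hα => ⟨hgam hα, decomp_of_gamma hn hpq φ β hβ hpcm (hgam hα)⟩⟩
  · intro hα S hS hS'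
    have hc := hpos S hS
    have hc' := hpos' S hS'
    obtain ⟨h1, h2⟩ := hfull hα S hS hS'
    have : (β S).supp = {bR β q S, bL β p S} := by
      ext a
      simp only [Lottery.supp, Finset.mem_filter, Finset.mem_univ, true_and, Finset.mem_insert,
        Finset.mem_singleton]
      constructor
      · intro ha
        by_contra hcon
        push Not at hcon
        rw [hgam hα S hS hS' a, gammaFun, if_neg hcon.1, if_neg hcon.2] at ha
        simp at ha
      · rintro (rfl | rfl)
        · rw [h1]; positivity
        · rw [h2]; positivity
    rw [this, Finset.card_pair (hne S)]
  · intro hsupp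
    have hval : ∀ S : Finset (Fin n), S.Nonempty → S ≠ Finset.univ →
        (β S).1 (bR β q S) = (S.card : ℝ) / n ∧
        (β S).1 (bL β p S) = ((n : ℝ) - S.card) / n := by
      intro S hS hS'
      have hc := hpos S hS
      have hc' := hpos' S hS'
      have exi : ∀ B : Finset (Fin m), 0 < (β S).prob B → ((β S).supp ∩ B).Nonempty := by
        intro B hB
        by_contra hcon
        rw [Finset.not_nonempty_iff_eq_empty] at hcon
        have : (β S).prob B = 0 := by
          apply Finset.sum_eq_zero
          intro a ha
          by_contra h0
          have : a ∈ (β S).supp ∩ B := by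
            simp only [Finset.mem_inter, Lottery.supp, Finset.mem_filter, Finset.mem_univ, true_and]
            exact ⟨lt_of_le_of_ne ((β S).2.1 a) (Ne.symm h0), ha⟩
          rw [hcon] at this
          simp at this
        linarith
      have n1 := exi (upSet q) (by rw [(hcrd S).1]; positivity)
      have n2 := exi (downSet p) (by rw [(hcrd S).2, hcard]; positivity)
      have m1 : bR β q S ∈ (β S).supp := by
        unfold bR; rw [dif_pos n1]
        exact (Finset.mem_inter.1 (Finset.min'_mem _ n1)).1
      have m2 : bL β p S ∈ (β S).supp := by
        unfold bL; rw [dif_pos n2]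
        exact (Finset.mem_inter.1 (Finset.max'_mem _ n2)).1
      have hs : ({bR β q S, bL β p S} : Finset (Fin m)) = (β S).supp := by
        apply Finset.eq_of_subset_of_card_le
        · intro a ha
          rw [Finset.mem_insert, Finset.mem_singleton] at ha
          rcases ha with rfl | rfl <;> assumption
        · rw [hsupp S hS hS', Finset.card_pair (hne S)]
      have hz : ∀ a, a ≠ bR β q S → a ≠ bL β p S → (β S).1 a = 0 := by
        intro a h1 h2
        have : a ∉ (β S).supp := by rw [← hs]; simp [h1, h2]
        simp only [Lottery.supp, Finset.mem_filter, Finset.mem_univ, true_and, not_lt] at this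
        exact le_antisymm this ((β S).2.1 a)
      have htot : (β S).1 (bR β q S) + (β S).1 (bL β p S) = 1 := by
        refine Eq.trans ?_ (β S).2.2
        rw [← Finset.sum_pair (f := (β S).1) (hne S)]
        apply Finset.sum_subset (Finset.subset_univ _)
        intro a _ ha
        simp only [Finset.mem_insert, Finset.mem_singleton, not_or] at ha
        exact hz a ha.1 ha.2
      have h3 : (S.card : ℝ) / n + ((n : ℝ) - S.card) / n = 1 := by field_simp; ring
      have := hRle S
      have := hLle S
      constructor <;> linarith
    have hset : {x : ℝ | ∃ S : Finset (Fin n), S.Nonempty ∧ S ≠ Finset.univ ∧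
      x = min ((β S).1 (bR β q S) / (S.card : ℝ))
            ((β S).1 (bL β p S) / ((n : ℝ) - (S.card : ℝ)))} = {1 / (n : ℝ)} := by
      have hx : ∀ S : Finset (Fin n), S.Nonempty → S ≠ Finset.univ →
          min ((β S).1 (bR β q S) / (S.card : ℝ))
            ((β S).1 (bL β p S) / ((n : ℝ) - (S.card : ℝ))) = 1 / (n : ℝ) := by
        intro S hS hS'
        have hc := hpos S hS
        have hc' := hpos' S hS'
        obtain ⟨h1, h2⟩ := hval S hS hS'
        rw [h1, h2, div_right_comm, div_self hc.ne', div_right_comm, div_self hc'.ne', min_self]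
      ext x
      simp only [Set.mem_setOf_eq, Set.mem_singleton_iff]
      constructor
      · rintro ⟨S, hS, hS', rfl⟩
        exact hx S hS hS'
      · rintro rfl
        have hS' : ({⟨0, by omega⟩} : Finset (Fin n)) ≠ Finset.univ := by
          intro h
          have := congrArg Finset.card h
          simp at this
          omega
        exact ⟨_, Finset.singleton_nonempty _, hS', (hx _ (Finset.singleton_nonempty _) hS').symm⟩
    unfold alphaVal
    rw [hset, csInf_singleton]
end
end
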